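/- arXiv:math/0102051 — 2 statements merged into one kernel-verified Lean document; each statement's English description precedes it below -/
import Mathlib

section
/- For every n ≥ 1 and every partition α of n with cycle type not of the form (d^m) (all parts equal), the signed sum Σ_{σ ∈ U_n, cycle type(σ) = α} (-1)^{des(σ)} equals 0, where des(σ) is the number of descents of σ. If α = (d^m) with dm = n, this sum equals μ(d). -/
/-- A permutation of `Fin n` is unimodal if it strictly increases up to some
position `m` and strictly decreases afterwards. -/
def Unimodal {n : ℕ} (σ : Equiv.Perm (Fin n)) : Prop :=
  ∃ m : Fin n, StrictMonoOn σ {i | i ≤ m} ∧ StrictAntiOn σ {i | m ≤ i}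

/-- The descent set: positions `i` (0-indexed, with `i+1 < n`) with `σ i > σ (i+1)`. -/
def descents {n : ℕ} (σ : Equiv.Perm (Fin n)) : Finset (Fin n) :=
  Finset.univ.filter (fun i => ∃ j : Fin n, (j : ℕ) = (i : ℕ) + 1 ∧ σ j < σ i)

/-- The number of descents. -/
def desNum {n : ℕ} (σ : Equiv.Perm (Fin n)) : ℕ := (descents σ).card

/-- The full cycle type of a permutation of `Fin n`, including fixed points
as parts equal to `1`. -/
def fullCycleType {n : ℕ} (σ : Equiv.Perm (Fin n)) : Multiset ℕ :=
  σ.cycleType + Multiset.replicate (n - σ.support.card) 1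

/-!
In the group algebra of the permutations of `n` letters let `t` be the Dynkin element, the
expansion of `[x₁, [x₂, … [xₙ₋₁, xₙ] … ]]` into words. Multiplying out the brackets shows that `t`
is the sum of `(-1) ^ des σ • σ` over the unimodal `σ`, and `t ^ 2 = n t` by the
Dynkin–Specht–Wever theorem. For the long cycle `γ` and a primitive `n`-th root of unity `ζ`, the
element `C = ∑ i, ζ ^ i γ ^ i` satisfies `C ^ 2 = n C` as well.

Each bracket contributes to `t` a factor `1 - ρ`, where `ρ` is a cyclic rotation of a final segment,
that is, `ρ = η γ` with `η` a rotation of the first `k` letters for some `k < n`. As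
`γ C = ζ⁻¹ C`, the factor acts on `C` as `1 - ζ⁻¹ η`, which is invertible because `η ^ k = 1` and
`ζ⁻¹ ^ k ≠ 1`; hence `t C = b C` for a unit `b`. Since `t` and `C` also have the same coefficient at
`1`, the idempotents `t / n` and `C / n` have the same trace in the regular representation, and
together with `t C = b C` this forces every class function to agree on `t` and `C`.

Applied to the indicator of a cycle type: all cycles of `γ ^ i` have length `orderOf (ζ ^ i)`, so on
`C` it gives zero unless the type is `(d ^ m)`, and then the sum of the primitive `d`-th roots of
unity, which is `μ(d)`.
-/

section RootsOfUnity

variable {R : Type*} [CommRing R] [IsDomain R]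

theorem sum_range_apply_pow {M : Type*} [AddCommMonoid M] {ζ : R} {n : ℕ}
    (hζ : IsPrimitiveRoot ζ n) (hn : 0 < n) (f : R → M) :
    ∑ i ∈ Finset.range n, f (ζ ^ i) = ∑ z ∈ Polynomial.nthRootsFinset n (1 : R), f z := by
  have : NeZero n := ⟨hn.ne'⟩
  refine Finset.sum_nbij (ζ ^ ·) (fun i _ => ?_) (fun i hi j hj h => ?_) (fun z hz => ?_)
    fun _ _ => rfl
  · rw [Polynomial.mem_nthRootsFinset hn, ← pow_mul, mul_comm, pow_mul, hζ.pow_eq_one, one_pow]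
  · exact hζ.pow_inj (Finset.mem_range.1 hi) (Finset.mem_range.1 hj) h
  · obtain ⟨i, hi, rfl⟩ := hζ.eq_pow_of_pow_eq_one ((Polynomial.mem_nthRootsFinset hn _).1 hz)
    exact ⟨i, Finset.mem_coe.2 (Finset.mem_range.2 hi), rfl⟩

theorem sum_nthRootsFinset_one {ζ : R} {n : ℕ} (hζ : IsPrimitiveRoot ζ n) (hn : 0 < n) :
    ∑ z ∈ Polynomial.nthRootsFinset n (1 : R), z = if n = 1 then 1 else 0 := by
  rw [← sum_range_apply_pow hζ hn fun z => z]
  split_ifs with h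
  · simp [h]
  · exact hζ.geom_sum_eq_zero (by omega)

theorem sum_primitiveRoots_eq_moebius {ζ : R} {n : ℕ} (hζ : IsPrimitiveRoot ζ n) :
    ∑ z ∈ primitiveRoots n R, z = ArithmeticFunction.moebius n := by
  classical
  induction n using Nat.strong_induction_on generalizing ζ with
  | _ n ih =>
  obtain rfl | hn := n.eq_zero_or_pos
  · simp
  have hroots : ∑ d ∈ n.divisors, ∑ z ∈ primitiveRoots d R, z = if n = 1 then 1 else 0 := by
    rw [← Finset.sum_biUnion fun _ _ _ _ h => IsPrimitiveRoot.disjoint h,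
      ← IsPrimitiveRoot.nthRoots_one_eq_biUnion_primitiveRoots, sum_nthRootsFinset_one hζ hn]
  have hmoebius : ∑ d ∈ n.divisors, (ArithmeticFunction.moebius d : R) =
      if n = 1 then 1 else 0 := by
    have := DFunLike.congr_fun ArithmeticFunction.moebius_mul_coe_zeta n
    rw [ArithmeticFunction.coe_mul_zeta_apply, ArithmeticFunction.one_apply] at this
    exact_mod_cast congrArg (Int.cast : ℤ → R) this
  have hproper : ∑ d ∈ n.properDivisors, ∑ z ∈ primitiveRoots d R, z =
      ∑ d ∈ n.properDivisors, (ArithmeticFunction.moebius d : R) := by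
    refine Finset.sum_congr rfl fun d hd => ?_
    obtain ⟨⟨k, rfl⟩, hlt⟩ := Nat.mem_properDivisors.1 hd
    exact ih d hlt (hζ.pow hn (mul_comm d k))
  rw [← Nat.cons_self_properDivisors hn.ne', Finset.sum_cons] at hroots hmoebius
  rw [hproper] at hroots
  exact add_right_cancel (hroots.trans hmoebius.symm)

theorem sum_pow_of_orderOf_eq {ζ : R} {n d : ℕ} (hζ : IsPrimitiveRoot ζ n) (hn : 0 < n)
    (hd : d ∣ n) :
    ∑ i ∈ Finset.range n with orderOf (ζ ^ i) = d, ζ ^ i = ArithmeticFunction.moebius d := by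
  obtain ⟨k, rfl⟩ := hd
  rw [← sum_primitiveRoots_eq_moebius (hζ.pow hn (mul_comm d k)), Finset.sum_filter,
    sum_range_apply_pow hζ hn fun z => if orderOf z = d then z else 0, ← Finset.sum_filter]
  congr 1
  ext z
  rw [Finset.mem_filter, Polynomial.mem_nthRootsFinset hn,
    mem_primitiveRoots (Nat.pos_of_mul_pos_right hn), IsPrimitiveRoot.iff_orderOf]
  refine and_iff_right_of_imp ?_
  rintro rfl
  rw [pow_mul, pow_orderOf_eq_one, one_pow]

end RootsOfUnity

section GeometricSum

theorem mul_geom_sum_eq_self {R : Type*} [Ring R] {x : R} {n : ℕ} (hx : x ^ n = 1) :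
    x * ∑ i ∈ Finset.range n, x ^ i = ∑ i ∈ Finset.range n, x ^ i := by
  have h := mul_neg_geom_sum x n
  rw [hx, sub_self, sub_mul, one_mul, sub_eq_zero] at h
  exact h.symm

theorem geom_sum_mul_geom_sum {R : Type*} [Ring R] {x : R} {n : ℕ} (hx : x ^ n = 1) :
    (∑ i ∈ Finset.range n, x ^ i) * ∑ i ∈ Finset.range n, x ^ i =
      n • ∑ i ∈ Finset.range n, x ^ i := by
  have hpow (i : ℕ) : x ^ i * ∑ j ∈ Finset.range n, x ^ j = ∑ j ∈ Finset.range n, x ^ j := by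
    induction i with
    | zero => rw [pow_zero, one_mul]
    | succ i ih => rw [pow_succ, mul_assoc, mul_geom_sum_eq_self hx, ih]
  rw [Finset.sum_mul, Finset.sum_congr rfl fun i _ => hpow i, Finset.sum_const, Finset.card_range]

theorem isUnit_one_sub_smul_of_pow_ne_one {K A : Type*} [Field K] [Ring A] [Algebra K A]
    {q : K} {x : A} {k : ℕ} (hx : x ^ k = 1) (hq : q ^ k ≠ 1) : IsUnit (1 - q • x) := by
  have hcomm : Commute (1 - q • x) (∑ i ∈ Finset.range k, (q • x) ^ i) :=
    Commute.sum_right _ _ _ fun i _ =>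
      ((Commute.one_left _).sub_left (Commute.refl _)).pow_right i
  refine (hcomm.isUnit_mul_iff.1 ?_).1
  rw [mul_neg_geom_sum, smul_pow, hx, ← Algebra.algebraMap_eq_smul_one, ← map_one (algebraMap K A),
    ← map_sub]
  exact (IsUnit.mk0 _ (sub_ne_zero.2 hq.symm)).map _

end GeometricSum

section Tracial

variable {A : Type*} [Ring A]

/-- An additive map that cannot distinguish `x * y` from `y * x`. -/
def IsTracial {M : Type*} [AddCommMonoid M] (φ : A →+ M) : Prop :=
  ∀ x y, φ (x * y) = φ (y * x)

theorem IsTracial.apply_units_conj {M : Type*} [AddCommMonoid M] {φ : A →+ M}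
    (hφ : IsTracial φ) (b : Aˣ) (x : A) : φ (b * x * ↑b⁻¹) = φ x := by
  rw [hφ, Units.inv_mul_cancel_left]

/-- The proof replaces `e` by its conjugate `e' = b * e * b⁻¹`, for which `f * e' = e'`; then
`f - e' * f` is idempotent and killed by `τ`. -/
theorem IsTracial.apply_eq_of_mul_eq_unit_mul {M P : Type*} [AddCommGroup M] [AddCommMonoid P]
    {τ : A →+ M} {φ : A →+ P} (hτ : IsTracial τ) (hφ : IsTracial φ)
    (hfaithful : ∀ x, IsIdempotentElem x → τ x = 0 → x = 0) {e f : A} (he : IsIdempotentElem e)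
    (hf : IsIdempotentElem f) (b : Aˣ) (hfe : f * e = b * e) (hτfe : τ f = τ e) : φ f = φ e := by
  have hfe' : f * (b * e * ↑b⁻¹) = b * e * ↑b⁻¹ := by
    rw [← hfe, ← mul_assoc, ← mul_assoc, hf.eq]
  have he' : IsIdempotentElem (b * e * ↑b⁻¹ : A) := by
    simp only [IsIdempotentElem, mul_assoc, Units.inv_mul_cancel_left]
    rw [← mul_assoc e e, he.eq]
  have hτe' := hτ.apply_units_conj b e
  have hφe' := hφ.apply_units_conj b e
  generalize (b * e * ↑b⁻¹ : A) = e' at hfe' he' hτe' hφe'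
  have hidem : IsIdempotentElem (f - e' * f) := by
    have : (f - e' * f) * (f - e' * f) = f * f - f * e' * f - e' * (f * f) + e' * (f * e') * f := by
      noncomm_ring
    rw [IsIdempotentElem, this, hf.eq, hfe', he'.eq, sub_add_cancel]
  have hzero : f = e' * f := sub_eq_zero.1 <| hfaithful _ hidem <| by
    rw [map_sub, hτ e' f, hfe', hτe', hτfe, sub_self]
  rw [hzero, hφ, hfe', hφe']

end Tracial

section GroupAlgebra

/-- A function on a group that is constant on conjugacy classes, in the form in which it makes
its linear extension to the group algebra tracial. -/
def IsClassFunction {G M : Type*} [Group G] (f : G → M) : Prop :=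
  ∀ g h, f (g * h) = f (h * g)

/-- The linear functional on the group algebra that extends a function on the group. -/
noncomputable def linearExtension {K G : Type*} [CommSemiring K] (f : G → K) :
    MonoidAlgebra K G →ₗ[K] K :=
  Finsupp.linearCombination K f ∘ₗ (MonoidAlgebra.coeffLinearEquiv K).toLinearMap

theorem linearExtension_single {K G : Type*} [CommSemiring K] (f : G → K) (g : G) (r : K) :
    linearExtension f (MonoidAlgebra.single g r) = r * f g := by
  simp [linearExtension]

theorem linearExtension_eq_sum {K G : Type*} [CommSemiring K] [Fintype G] (f : G → K)
    (x : MonoidAlgebra K G) : linearExtension f x = ∑ g, x.coeff g * f g := by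
  simp [linearExtension, Finsupp.linearCombination_apply, Finsupp.sum_fintype]

theorem IsClassFunction.isTracial_linearExtension {K G : Type*} [CommRing K] [Group G]
    {f : G → K} (hf : IsClassFunction f) :
    IsTracial (linearExtension f : MonoidAlgebra K G →+ K) := by
  intro x y
  induction x using MonoidAlgebra.induction_linear with
  | zero => simp
  | add x₁ x₂ h₁ h₂ => rw [add_mul, mul_add, map_add, map_add, h₁, h₂]
  | single g r =>
    induction y using MonoidAlgebra.induction_linear with
    | zero => simp
    | add y₁ y₂ h₁ h₂ => rw [add_mul, mul_add, map_add, map_add, h₁, h₂]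
    | single h s =>
      simp only [AddMonoidHom.coe_coe, MonoidAlgebra.single_mul_single, linearExtension_single,
        hf g h, mul_comm r s]

theorem trace_mulLeft_eq_card_mul_coeff_one {K G : Type*} [CommRing K] [Group G] [Fintype G]
    (a : MonoidAlgebra K G) :
    LinearMap.trace K (MonoidAlgebra K G) (LinearMap.mulLeft K a) =
      Fintype.card G * a.coeff 1 := by
  classical
  let B : Module.Basis G K (MonoidAlgebra K G) :=
    Module.Basis.ofRepr (MonoidAlgebra.coeffLinearEquiv K)
  have hdiag (g : G) : (LinearMap.toMatrix B B (LinearMap.mulLeft K a)).diag g = a.coeff 1 := by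
    rw [Matrix.diag_apply, LinearMap.toMatrix_apply, LinearMap.mulLeft_apply]
    change (a * MonoidAlgebra.single g 1).coeff g = _
    simp
  rw [LinearMap.trace_eq_matrix_trace K B, Matrix.trace, Finset.sum_congr rfl fun g _ => hdiag g,
    Finset.sum_const, Finset.card_univ, nsmul_eq_mul]

theorem eq_zero_of_isIdempotentElem_of_coeff_one_eq_zero {K G : Type*} [Field K] [CharZero K]
    [Group G] [Finite G] {a : MonoidAlgebra K G} (ha : IsIdempotentElem a) (h : a.coeff 1 = 0) :
    a = 0 := by
  have := Fintype.ofFinite G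
  have hidem : IsIdempotentElem (LinearMap.mulLeft K a) := by
    rw [IsIdempotentElem, Module.End.mul_eq_comp, ← LinearMap.mulLeft_mul, ha.eq]
  have hzero := LinearMap.IsIdempotentElem.eq_zero_of_trace_eq_zero hidem
    (by rw [trace_mulLeft_eq_card_mul_coeff_one, h, mul_zero])
  exact (LinearMap.mulLeft_eq_zero_iff K _ a).1 hzero

theorem IsClassFunction.linearExtension_eq_of_mul_eq_unit_mul {K G : Type*} [Field K]
    [CharZero K] [Group G] [Finite G] {f : G → K} (hf : IsClassFunction f) {n : ℕ} (hn : n ≠ 0)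
    {x y b : MonoidAlgebra K G} (hx : x * x = n • x) (hy : y * y = n • y) (hb : IsUnit b)
    (hxy : x * y = b * y) (hone : x.coeff 1 = y.coeff 1) :
    linearExtension f x = linearExtension f y := by
  classical
  have hn' : (n : K) ≠ 0 := Nat.cast_ne_zero.2 hn
  obtain ⟨b, rfl⟩ := hb
  have hidem {z : MonoidAlgebra K G} (hz : z * z = n • z) :
      IsIdempotentElem ((n : K)⁻¹ • z) := by
    rw [IsIdempotentElem, smul_mul_smul_comm, hz, ← Nat.cast_smul_eq_nsmul K, smul_smul,
      mul_assoc, inv_mul_cancel₀ hn', mul_one]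
  have hindicator : IsClassFunction fun g : G => if g = 1 then (1 : K) else 0 := fun g h => by
    simp only [mul_eq_one_comm (a := g)]
  have hcoeff (z : MonoidAlgebra K G) :
      linearExtension (fun g => if g = 1 then (1 : K) else 0) z = z.coeff 1 := by
    have := Fintype.ofFinite G
    simp [linearExtension_eq_sum]
  have := hindicator.isTracial_linearExtension.apply_eq_of_mul_eq_unit_mul
    hf.isTracial_linearExtension
    (fun z hz h => eq_zero_of_isIdempotentElem_of_coeff_one_eq_zero hz ((hcoeff z).symm.trans h))
    (hidem hy) (hidem hx) ((Units.mk0 _ hn')⁻¹ • b)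
    (by rw [smul_mul_smul_comm, hxy, ← smul_mul_smul_comm]; rfl) (by simp [hcoeff, hone])
  simpa [hn'] using this

end GroupAlgebra

section BlockSwap

/-- The underlying function of `blockSwap`. -/
def blockSwapFun (a p q i : ℕ) : ℕ :=
  if i < a then i else if i < a + q then i + p else if i < a + q + p then i - q else i

theorem blockSwapFun_lt {n a p q i : ℕ} (h : a + p + q ≤ n) (hi : i < n) :
    blockSwapFun a p q i < n := by
  unfold blockSwapFun; split_ifs <;> omega

theorem blockSwapFun_blockSwapFun (a p q i : ℕ) :
    blockSwapFun a q p (blockSwapFun a p q i) = i := by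
  unfold blockSwapFun; split_ifs <;> omega

/-- The permutation of positions that exchanges two adjacent blocks, of lengths `p` and `q`, the
first of which starts at position `a`: in the word `i ↦ blockSwap n a p q i` the `q` letters of the
second block come first. If the blocks do not fit into `Fin n` it is the identity. -/
def blockSwap (n a p q : ℕ) : Equiv.Perm (Fin n) :=
  if h : a + p + q ≤ n then
    { toFun := fun i => ⟨blockSwapFun a p q i, blockSwapFun_lt h i.2⟩
      invFun := fun i => ⟨blockSwapFun a q p i, blockSwapFun_lt (by omega) i.2⟩
      left_inv := fun i => Fin.ext (blockSwapFun_blockSwapFun a p q i)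
      right_inv := fun i => Fin.ext (blockSwapFun_blockSwapFun a q p i) }
  else 1

theorem val_blockSwap {n a p q : ℕ} (h : a + p + q ≤ n) (i : Fin n) :
    (blockSwap n a p q i : ℕ) =
      if (i : ℕ) < a then (i : ℕ) else if (i : ℕ) < a + q then i + p
        else if (i : ℕ) < a + q + p then i - q else i := by
  rw [blockSwap, dif_pos h]; rfl

variable {n a p q r : ℕ}

theorem blockSwap_apply_of_lt (h : a + p + q ≤ n) {i : Fin n} (hi : (i : ℕ) < a) :
    blockSwap n a p q i = i := by
  ext; rw [val_blockSwap h, if_pos hi]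

theorem blockSwap_apply_of_le (h : a + p + q ≤ n) {i : Fin n} (hi : a + p + q ≤ (i : ℕ)) :
    blockSwap n a p q i = i := by
  ext; rw [val_blockSwap h]; split_ifs <;> omega

theorem blockSwap_zero_left (h : a + q ≤ n) : blockSwap n a 0 q = 1 := by
  ext i
  simp (disch := omega) only [val_blockSwap, Equiv.Perm.one_apply]
  grind

theorem blockSwap_mul_blockSwap_symm (h : a + p + q ≤ n) :
    blockSwap n a p q * blockSwap n a q p = 1 := by
  ext i
  simp (disch := omega) only [Equiv.Perm.mul_apply, val_blockSwap, Equiv.Perm.one_apply]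
  grind

theorem blockSwap_mul_blockSwap_extend (h : a + p + q + r ≤ n) :
    blockSwap n a p q * blockSwap n (a + q) p r = blockSwap n a p (q + r) := by
  ext i
  simp (disch := omega) only [Equiv.Perm.mul_apply, val_blockSwap]
  grind

theorem blockSwap_mul_blockSwap_cancel (h : a + p + q + r ≤ n) :
    blockSwap n a p q * blockSwap n a q (p + r) = blockSwap n (a + p) q r := by
  ext i
  simp (disch := omega) only [Equiv.Perm.mul_apply, val_blockSwap]
  grind

theorem blockSwap_mul_blockSwap_rotate (h : a + p + q + r ≤ n) :
    blockSwap n a p (q + r) * blockSwap n a q (p + r) = blockSwap n a (p + q) r := by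
  ext i
  simp (disch := omega) only [Equiv.Perm.mul_apply, val_blockSwap]
  grind

theorem blockSwap_mul_blockSwap_exchange (h : a + p + q + r ≤ n) :
    blockSwap n (a + p) q r * blockSwap n a p (q + r) =
      blockSwap n a p q * blockSwap n a (p + q) r := by
  ext i
  simp (disch := omega) only [Equiv.Perm.mul_apply, val_blockSwap]
  grind

theorem semiconjBy_blockSwap_succ {x m : ℕ} (hx : a ≤ x) (hm : x + p + q ≤ a + m)
    (hn : a + 1 + m ≤ n) :
    SemiconjBy (blockSwap n a 1 m) (blockSwap n x p q) (blockSwap n (x + 1) p q) := by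
  ext i
  simp (disch := omega) only [Equiv.Perm.mul_apply, val_blockSwap]
  grind

theorem commute_blockSwap {a' p' q' : ℕ} (h : a + p + q ≤ a') (h' : a' + p' + q' ≤ n) :
    Commute (blockSwap n a p q) (blockSwap n a' p' q') := by
  refine Equiv.Perm.Disjoint.commute fun i => ?_
  rcases lt_or_ge (i : ℕ) a' with hi | hi
  · exact .inr (blockSwap_apply_of_lt h' hi)
  · exact .inl (blockSwap_apply_of_le (by omega) (h.trans hi))

theorem blockSwap_one_pow {j : ℕ} (hjr : j + r = q + 1) (h : a + 1 + q ≤ n) :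
    blockSwap n a 1 q ^ j = blockSwap n a j r := by
  induction j generalizing r with
  | zero => rw [pow_zero, blockSwap_zero_left (by omega)]
  | succ j ih =>
    obtain rfl : q = j + r := by omega
    rw [pow_succ, ih (r := 1 + r) (by omega), blockSwap_mul_blockSwap_rotate (by omega)]

theorem blockSwap_one_right_pow (h : a + p + 1 ≤ n) : blockSwap n a p 1 ^ (p + 1) = 1 := by
  have hpow : blockSwap n a 1 p ^ (p + 1) = 1 := by
    have := blockSwap_mul_blockSwap_symm h
    rw [pow_succ, blockSwap_one_pow (r := 1) rfl (by omega), this]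
  rw [eq_inv_of_mul_eq_one_left (blockSwap_mul_blockSwap_symm h), inv_pow, hpow, inv_one]

theorem blockSwap_zero_one (N : ℕ) : blockSwap (N + 1) 0 1 N = finRotate (N + 1) := by
  ext i
  rw [val_blockSwap (by omega), coe_finRotate]
  grind

end BlockSwap

section NestedBracket

variable (K : Type*) [CommRing K] {n : ℕ}

/-- The element of the group algebra that, acting on words, replaces the adjacent blocks `P`, `Q`
by their commutator `[P, Q] = P Q - Q P`. -/
noncomputable def blockBracket (n a p q : ℕ) : MonoidAlgebra K (Equiv.Perm (Fin n)) :=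
  1 - MonoidAlgebra.of K _ (blockSwap n a p q)

/-- The right-nested bracket `[x₁, [x₂, … [x_l, Q] … ]]` of the `l` letters from position `a` on
with the block `Q` of length `m` that follows them. For `a = 0`, `m = 1` and `l + 1 = n` this is the
Dynkin element. -/
noncomputable def nestedBracket (n : ℕ) : ℕ → ℕ → ℕ → MonoidAlgebra K (Equiv.Perm (Fin n))
  | _, 0, _ => 1
  | a, l + 1, m => nestedBracket n (a + 1) l m * blockBracket K n a 1 (l + m)

theorem nestedBracket_succ (a l m : ℕ) :
    nestedBracket K n a (l + 1) m = nestedBracket K n (a + 1) l m * blockBracket K n a 1 (l + m) :=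
  rfl

theorem nestedBracket_succ' (a l m : ℕ) :
    nestedBracket K n a (l + 1) m =
      blockBracket K n (a + l) 1 m * nestedBracket K n a l (m + 1) := by
  induction l generalizing a with
  | zero => simp [nestedBracket]
  | succ l ih =>
    rw [nestedBracket_succ, ih, nestedBracket_succ K a l, mul_assoc, add_right_comm a 1 l,
      add_assoc a l 1, add_right_comm l 1 m, add_assoc l m 1]

theorem semiconjBy_blockBracket {τ : Equiv.Perm (Fin n)} {a b p q : ℕ}
    (h : SemiconjBy τ (blockSwap n a p q) (blockSwap n b p q)) :
    SemiconjBy (MonoidAlgebra.of K _ τ) (blockBracket K n a p q) (blockBracket K n b p q) :=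
  (SemiconjBy.one_right _).sub_right (h.map _)

theorem semiconjBy_nestedBracket {τ : Equiv.Perm (Fin n)} {d a l m : ℕ}
    (h : ∀ x p q, a ≤ x → x + p + q ≤ a + l + m →
      SemiconjBy τ (blockSwap n x p q) (blockSwap n (x + d) p q)) :
    SemiconjBy (MonoidAlgebra.of K _ τ) (nestedBracket K n a l m)
      (nestedBracket K n (a + d) l m) := by
  induction l generalizing a with
  | zero => exact SemiconjBy.one_right _
  | succ l ih =>
    have htail := ih (a := a + 1) fun x p q hx hxpq => h x p q (by omega) (by omega)
    rw [add_right_comm] at htail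
    exact htail.mul_right (semiconjBy_blockBracket K (h a 1 (l + m) le_rfl (by omega)))

theorem blockBracket_jacobi {a p q r : ℕ} (h : a + p + q + r ≤ n) :
    blockBracket K n (a + p) q r * blockBracket K n a p (q + r) -
        MonoidAlgebra.of K _ (blockSwap n a p q) *
          (blockBracket K n (a + q) p r * blockBracket K n a q (p + r)) =
      blockBracket K n a p q * blockBracket K n a (p + q) r := by
  have hextend := congrArg (MonoidAlgebra.of K _) (blockSwap_mul_blockSwap_extend h)
  have hcancel := congrArg (MonoidAlgebra.of K _) (blockSwap_mul_blockSwap_cancel h)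
  have hrotate := congrArg (MonoidAlgebra.of K _) (blockSwap_mul_blockSwap_rotate h)
  have hexchange := congrArg (MonoidAlgebra.of K _) (blockSwap_mul_blockSwap_exchange h)
  rw [map_mul] at hextend hcancel hrotate
  rw [map_mul, map_mul] at hexchange
  simp only [blockBracket, mul_sub, sub_mul, mul_one, one_mul, ← mul_assoc]
  rw [hextend, hcancel, hrotate, hexchange]
  abel

/-- Since `ad [x, y] = [ad x, ad y]`, expanding the bracket `P` of `l + 1` letters into words `w`
and applying `ad w₁ ∘ … ∘ ad w_{l+1}` to a block `Q` gives `[P, Q]`. -/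
theorem nestedBracket_mul_nestedBracket {a l m : ℕ} (h : a + l + 1 + m ≤ n) :
    nestedBracket K n a l 1 * nestedBracket K n a (l + 1) m =
      nestedBracket K n a l 1 * blockBracket K n a (l + 1) m := by
  induction l generalizing a m with
  | zero => simp [nestedBracket]
  | succ l ih =>
    set T := nestedBracket K n (a + 1) l 1
    set T' := nestedBracket K n a l 1
    set X := MonoidAlgebra.of K _ (blockSwap n a 1 (l + 1))
    have hX : X * T' = T * X := semiconjBy_nestedBracket K fun x p q hx hxpq =>
      semiconjBy_blockSwap_succ hx (by omega) (by omega)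
    have hcomm : Commute T' (blockBracket K n (a + (l + 1)) 1 m) :=
      (Commute.one_right _).sub_right <| Commute.symm <|
        semiconjBy_nestedBracket (d := 0) K fun x p q _ hxpq =>
          (commute_blockSwap (by omega) (by omega)).symm
    have hleft : T * nestedBracket K n a (l + 1 + 1) m =
        T * (blockBracket K n (a + 1) (l + 1) m * blockBracket K n a 1 (l + 1 + m)) := by
      rw [nestedBracket_succ, ← mul_assoc, ih (by omega), mul_assoc]
    have hright : T * X * nestedBracket K n a (l + 1 + 1) m =
        T * X * (blockBracket K n (a + (l + 1)) 1 m * blockBracket K n a (l + 1) (1 + m)) := by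
      rw [← hX, nestedBracket_succ', mul_assoc, ← mul_assoc T', hcomm.eq, mul_assoc _ T',
        ih (by omega), ← mul_assoc _ T', ← hcomm.eq, add_comm m 1]
      simp only [mul_assoc]
    calc T * blockBracket K n a 1 (l + 1) * nestedBracket K n a (l + 1 + 1) m
        = T * nestedBracket K n a (l + 1 + 1) m - T * X * nestedBracket K n a (l + 1 + 1) m := by
          rw [blockBracket, mul_sub, mul_one, sub_mul]
      _ = T * (blockBracket K n a 1 (l + 1) * blockBracket K n a (1 + (l + 1)) m) := by
          rw [hleft, hright, mul_assoc, ← mul_sub, blockBracket_jacobi K (by omega)]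
      _ = T * blockBracket K n a 1 (l + 1) * blockBracket K n a (l + 1 + 1) m := by
          rw [← mul_assoc, add_comm 1 (l + 1)]

theorem nestedBracket_mul_self {a l : ℕ} (h : a + l + 1 ≤ n) :
    nestedBracket K n a l 1 * nestedBracket K n a l 1 = (l + 1) • nestedBracket K n a l 1 := by
  induction l generalizing a with
  | zero => simp [nestedBracket]
  | succ l ih =>
    set T := nestedBracket K n (a + 1) l 1
    set T' := nestedBracket K n a l 1
    set X := MonoidAlgebra.of K _ (blockSwap n a 1 (l + 1))
    have hdef : nestedBracket K n a (l + 1) 1 = T - T * X := by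
      rw [nestedBracket_succ, blockBracket, mul_sub, mul_one]
    have hX : X * T' = T * X := semiconjBy_nestedBracket K fun x p q hx hxpq =>
      semiconjBy_blockSwap_succ hx (by omega) (by omega)
    have hleft : T * nestedBracket K n a (l + 1) 1 = (l + 1) • nestedBracket K n a (l + 1) 1 := by
      rw [nestedBracket_succ, ← mul_assoc, ih (by omega), smul_mul_assoc]
    have hinv : X * MonoidAlgebra.of K _ (blockSwap n a (l + 1) 1) = 1 := by
      rw [← map_mul, blockSwap_mul_blockSwap_symm (by omega), map_one]
    have hright : T * X * nestedBracket K n a (l + 1) 1 = -nestedBracket K n a (l + 1) 1 := by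
      rw [← hX, mul_assoc, nestedBracket_mul_nestedBracket K (by omega), ← mul_assoc, hX,
        mul_assoc, blockBracket, mul_sub, mul_one, hinv, mul_sub, mul_one, hdef, neg_sub]
    calc nestedBracket K n a (l + 1) 1 * nestedBracket K n a (l + 1) 1
        = T * nestedBracket K n a (l + 1) 1 - T * X * nestedBracket K n a (l + 1) 1 := by
          rw [← sub_mul, ← hdef]
      _ = (l + 1 + 1) • nestedBracket K n a (l + 1) 1 := by
          rw [hleft, hright, sub_neg_eq_add, succ_nsmul _ (l + 1)]

end NestedBracket

section LongCycle

theorem val_finRotate_pow_apply (N j : ℕ) (x : Fin (N + 1)) :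
    ((finRotate (N + 1) ^ j) x : ℕ) = (x + j) % (N + 1) := by
  induction j with
  | zero => exact (Nat.mod_eq_of_lt x.2).symm
  | succ j ih =>
    rw [pow_succ', Equiv.Perm.mul_apply, finRotate_apply, Fin.val_add, Fin.val_one', ih,
      ← Nat.add_mod, add_assoc]

theorem finRotate_pow_apply_eq_self_iff {N j : ℕ} {x : Fin (N + 1)} :
    (finRotate (N + 1) ^ j) x = x ↔ N + 1 ∣ j := by
  rw [Fin.ext_iff, val_finRotate_pow_apply, ← Nat.add_modEq_left_iff (a := x), Nat.ModEq,
    Nat.mod_eq_of_lt x.2]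

theorem finRotate_pow_eq_one_iff {N j : ℕ} : finRotate (N + 1) ^ j = 1 ↔ N + 1 ∣ j := by
  simp only [Equiv.Perm.ext_iff, Equiv.Perm.one_apply, finRotate_pow_apply_eq_self_iff,
    forall_const]

end LongCycle

section CyclicSum

variable {R : Type*} [CommRing R]

/-- The sum `∑ i, ζ ^ i γ ^ i` over the cyclic group generated by the long cycle `γ`; up to a
scalar, the idempotent of a linear character of that group when `ζ ^ (N + 1) = 1`. -/
noncomputable def cyclicSum (N : ℕ) (ζ : R) : MonoidAlgebra R (Equiv.Perm (Fin (N + 1))) :=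
  ∑ i ∈ Finset.range (N + 1), (ζ • MonoidAlgebra.of R _ (finRotate (N + 1))) ^ i

theorem linearExtension_cyclicSum (N : ℕ) (ζ : R) (f : Equiv.Perm (Fin (N + 1)) → R) :
    linearExtension f (cyclicSum N ζ) =
      ∑ i ∈ Finset.range (N + 1), ζ ^ i * f (finRotate (N + 1) ^ i) := by
  simp only [cyclicSum, map_sum, smul_pow, map_smul, MonoidAlgebra.of_apply,
    MonoidAlgebra.single_pow, one_pow, linearExtension_single, one_mul, smul_eq_mul]

theorem coeff_one_cyclicSum (N : ℕ) (ζ : R) : (cyclicSum N ζ).coeff 1 = 1 := by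
  have hcoeff (i : ℕ) : ((ζ • MonoidAlgebra.of R _ (finRotate (N + 1))) ^ i).coeff 1 =
      if N + 1 ∣ i then ζ ^ i else 0 := by
    classical
    simp [MonoidAlgebra.single_pow, MonoidAlgebra.coeff_single, Finsupp.single_apply,
      finRotate_pow_eq_one_iff]
  rw [cyclicSum, MonoidAlgebra.coeff_sum, Finsupp.finsetSum_apply,
    Finset.sum_congr rfl fun i _ => hcoeff i, Finset.sum_eq_single 0]
  · rw [if_pos (dvd_zero _), pow_zero]
  · exact fun i hi hi0 => if_neg fun h => hi0 (Nat.eq_zero_of_dvd_of_lt h (Finset.mem_range.1 hi))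
  · exact fun h => absurd (Finset.mem_range.2 N.succ_pos) h

variable {N : ℕ}

theorem smul_finRotate_pow {ζ : R} (hζ : ζ ^ (N + 1) = 1) :
    (ζ • MonoidAlgebra.of R _ (finRotate (N + 1))) ^ (N + 1) = 1 := by
  rw [smul_pow, hζ, one_smul, ← map_pow, finRotate_pow_eq_one_iff.2 dvd_rfl, map_one]

theorem cyclicSum_mul_self {ζ : R} (hζ : ζ ^ (N + 1) = 1) :
    cyclicSum N ζ * cyclicSum N ζ = (N + 1) • cyclicSum N ζ :=
  geom_sum_mul_geom_sum (smul_finRotate_pow hζ)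

variable {K : Type*} [Field K] {ζ : K}

theorem finRotate_mul_cyclicSum (hζ : ζ ^ (N + 1) = 1) :
    MonoidAlgebra.of K _ (finRotate (N + 1)) * cyclicSum N ζ = ζ⁻¹ • cyclicSum N ζ := by
  have hζ0 : ζ ≠ 0 := (IsUnit.of_pow_eq_one hζ N.succ_ne_zero).ne_zero
  rw [eq_inv_smul_iff₀ hζ0, ← smul_mul_assoc]
  exact mul_geom_sum_eq_self (smul_finRotate_pow hζ)

theorem exists_isUnit_nestedBracket_mul_cyclicSum (hζ : IsPrimitiveRoot ζ (N + 1)) {k l : ℕ}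
    (hkl : k + l = N) :
    ∃ b, IsUnit b ∧ nestedBracket K (N + 1) k l 1 * cyclicSum N ζ = b * cyclicSum N ζ := by
  induction l generalizing k with
  | zero => exact ⟨1, isUnit_one, rfl⟩
  | succ l ih =>
    obtain ⟨b, hb, hbC⟩ := ih (k := k + 1) (by omega)
    set η := MonoidAlgebra.of K _ (blockSwap (N + 1) 0 k 1)
    have hswap : blockSwap (N + 1) k 1 (l + 1) = blockSwap (N + 1) 0 k 1 * finRotate (N + 1) := by
      have := blockSwap_mul_blockSwap_cancel (n := N + 1) (a := 0) (p := k) (q := 1) (r := l + 1)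
        (by omega)
      rw [hkl, blockSwap_zero_one, zero_add] at this
      exact this.symm
    have hlast : blockBracket K (N + 1) k 1 (l + 1) * cyclicSum N ζ =
        (1 - ζ⁻¹ • η) * cyclicSum N ζ := by
      rw [blockBracket, hswap, map_mul, sub_mul, mul_assoc,
        finRotate_mul_cyclicSum hζ.pow_eq_one, mul_smul_comm, sub_mul, smul_mul_assoc]
    have hcomm : Commute (1 - ζ⁻¹ • η) (nestedBracket K (N + 1) (k + 1) l 1) :=
      (Commute.one_left _).sub_left <| Commute.smul_left
        (semiconjBy_nestedBracket (d := 0) K fun x p q hx hxpq =>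
          commute_blockSwap (by omega) (by omega)) _
    have hunit : IsUnit (1 - ζ⁻¹ • η) := by
      refine isUnit_one_sub_smul_of_pow_ne_one (k := k + 1) ?_
        (hζ.inv.pow_ne_one_of_pos_of_lt (by omega) (by omega))
      rw [← map_pow, blockSwap_one_right_pow (by omega), map_one]
    refine ⟨(1 - ζ⁻¹ • η) * b, hunit.mul hb, ?_⟩
    rw [nestedBracket_succ, mul_assoc, hlast, ← mul_assoc, ← hcomm.eq, mul_assoc, hbC, mul_assoc]

end CyclicSum

section FixZero

/-- The embedding of `Perm (Fin n)` into `Perm (Fin (n + 1))` as the stabilizer of `0`. -/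
def fixZeroHom (n : ℕ) : Equiv.Perm (Fin n) →* Equiv.Perm (Fin (n + 1)) where
  toFun τ := Equiv.Perm.decomposeFin.symm (0, τ)
  map_one' := by ext i; refine Fin.cases ?_ (fun i => ?_) i <;> simp
  map_mul' σ τ := by ext i; refine Fin.cases ?_ (fun i => ?_) i <;> simp

variable {n : ℕ}

@[simp]
theorem fixZeroHom_apply_zero (τ : Equiv.Perm (Fin n)) : fixZeroHom n τ 0 = 0 :=
  Equiv.Perm.decomposeFin_symm_apply_zero 0 τ

@[simp]
theorem fixZeroHom_apply_succ (τ : Equiv.Perm (Fin n)) (i : Fin n) :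
    fixZeroHom n τ i.succ = (τ i).succ :=
  by simp [fixZeroHom]

theorem fixZeroHom_injective : Function.Injective (fixZeroHom n) := fun σ τ h => by
  ext i
  have := DFunLike.congr_fun h i.succ
  rw [fixZeroHom_apply_succ, fixZeroHom_apply_succ, Fin.succ_inj] at this
  rw [this]

theorem exists_fixZeroHom_eq {σ : Equiv.Perm (Fin (n + 1))} (h : σ 0 = 0) :
    ∃ τ, fixZeroHom n τ = σ := by
  obtain ⟨⟨p, τ⟩, rfl⟩ := Equiv.Perm.decomposeFin.symm.surjective σ
  rw [Equiv.Perm.decomposeFin_symm_apply_zero] at h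
  exact ⟨τ, by rw [h]; rfl⟩

theorem fixZeroHom_blockSwap {a p q : ℕ} (h : a + p + q ≤ n) :
    fixZeroHom n (blockSwap n a p q) = blockSwap (n + 1) (a + 1) p q := by
  ext i
  cases i using Fin.cases with
  | zero => simp (disch := omega) [val_blockSwap]
  | succ i =>
    simp (disch := omega) only [fixZeroHom_apply_succ, Fin.val_succ, val_blockSwap]
    grind

theorem mapDomainRingHom_fixZeroHom_nestedBracket (K : Type*) [CommRing K] {a l m : ℕ}
    (h : a + l + m ≤ n) :
    MonoidAlgebra.mapDomainRingHom K (fixZeroHom n) (nestedBracket K n a l m) =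
      nestedBracket K (n + 1) (a + 1) l m := by
  induction l generalizing a with
  | zero => exact map_one _
  | succ l ih =>
    rw [nestedBracket_succ, map_mul, ih (by omega), nestedBracket_succ, blockBracket, map_sub,
      map_one, MonoidAlgebra.of_apply, MonoidAlgebra.mapDomainRingHom_apply,
      MonoidAlgebra.mapDomain_single, fixZeroHom_blockSwap (by omega)]
    rfl

theorem coeff_mapDomainRingHom_fixZeroHom {K : Type*} [CommRing K]
    (x : MonoidAlgebra K (Equiv.Perm (Fin n))) (τ : Equiv.Perm (Fin n)) :
    (MonoidAlgebra.mapDomainRingHom K (fixZeroHom n) x).coeff (fixZeroHom n τ) = x.coeff τ :=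
  Finsupp.mapDomain_apply fixZeroHom_injective _ τ

theorem coeff_mapDomainRingHom_fixZeroHom_eq_zero {K : Type*} [CommRing K]
    (x : MonoidAlgebra K (Equiv.Perm (Fin n))) {σ : Equiv.Perm (Fin (n + 1))} (h : σ 0 ≠ 0) :
    (MonoidAlgebra.mapDomainRingHom K (fixZeroHom n) x).coeff σ = 0 := by
  refine Finsupp.mapDomain_of_notMem_range _ _ ?_
  rintro ⟨τ, rfl⟩
  exact h (fixZeroHom_apply_zero τ)

theorem nestedBracket_zero_succ (K : Type*) [CommRing K] (N : ℕ) :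
    nestedBracket K (N + 2) 0 (N + 1) 1 =
      MonoidAlgebra.mapDomainRingHom K (fixZeroHom (N + 1)) (nestedBracket K (N + 1) 0 N 1) *
        (1 - MonoidAlgebra.of K _ (finRotate (N + 2))) := by
  rw [mapDomainRingHom_fixZeroHom_nestedBracket K (by omega), ← blockSwap_zero_one]
  rfl

end FixZero

section Unimodal

theorem desNum_eq_sum {N : ℕ} (σ : Equiv.Perm (Fin (N + 1))) :
    desNum σ = ∑ j : Fin N, if σ j.succ < σ j.castSucc then 1 else 0 := by
  have hdescents : descents σ =
      (Finset.univ.filter fun j : Fin N => σ j.succ < σ j.castSucc).map Fin.castSuccEmb := by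
    ext i
    simp only [descents, Finset.mem_filter, Finset.mem_univ, true_and, Finset.mem_map]
    constructor
    · rintro ⟨j, hj, hlt⟩
      have hi : (i : ℕ) < N := by omega
      refine ⟨⟨i, hi⟩, ?_, rfl⟩
      rwa [show (⟨i, hi⟩ : Fin N).succ = j from Fin.ext hj.symm]
    · rintro ⟨j, hlt, rfl⟩
      exact ⟨j.succ, rfl, hlt⟩
  rw [desNum, hdescents, Finset.card_map, Finset.card_filter]

variable {N : ℕ} (τ : Equiv.Perm (Fin (N + 1)))

theorem fixZeroHom_mul_finRotate_castSucc (i : Fin (N + 1)) :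
    (fixZeroHom (N + 1) τ * finRotate (N + 2)) i.castSucc = (τ i).succ := by
  rw [Equiv.Perm.mul_apply, finRotate_apply, Fin.coeSucc_eq_succ, fixZeroHom_apply_succ]

theorem fixZeroHom_mul_finRotate_last :
    (fixZeroHom (N + 1) τ * finRotate (N + 2)) (Fin.last (N + 1)) = 0 := by
  rw [Equiv.Perm.mul_apply, finRotate_last, fixZeroHom_apply_zero]

theorem desNum_fixZeroHom : desNum (fixZeroHom (N + 1) τ) = desNum τ := by
  rw [desNum_eq_sum, desNum_eq_sum, Fin.sum_univ_succ]
  simp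

theorem desNum_fixZeroHom_mul_finRotate :
    desNum (fixZeroHom (N + 1) τ * finRotate (N + 2)) = desNum τ + 1 := by
  rw [desNum_eq_sum, desNum_eq_sum, Fin.sum_univ_castSucc]
  simp only [Fin.succ_last, Fin.succ_castSucc, fixZeroHom_mul_finRotate_castSucc,
    fixZeroHom_mul_finRotate_last, Fin.succ_lt_succ_iff, Fin.succ_pos, if_true]

theorem Unimodal.apply_zero_or_apply_last {σ : Equiv.Perm (Fin (N + 1))} (hσ : Unimodal σ) :
    σ 0 = 0 ∨ σ (Fin.last N) = 0 := by
  obtain ⟨m, hmono, hanti⟩ := hσ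
  simp only [← Fin.le_zero_iff]
  have hmin : σ (σ.symm 0) = 0 := σ.apply_symm_apply 0
  rcases le_total (σ.symm 0) m with h | h
  · exact .inl (hmin.le.trans' <| hmono.monotoneOn (Fin.zero_le m) h (Fin.zero_le _))
  · exact .inr (hmin.le.trans' <| hanti.antitoneOn h (Fin.le_last m) (Fin.le_last _))

theorem unimodal_fixZeroHom : Unimodal (fixZeroHom (N + 1) τ) ↔ Unimodal τ := by
  simp [Unimodal, StrictMonoOn, StrictAntiOn, Fin.exists_fin_succ, Fin.forall_fin_succ (n := N + 1)]

theorem unimodal_fixZeroHom_mul_finRotate :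
    Unimodal (fixZeroHom (N + 1) τ * finRotate (N + 2)) ↔ Unimodal τ := by
  have hnot (i : Fin (N + 1)) : ¬Fin.last (N + 1) < i.castSucc := (Fin.castSucc_lt_last i).not_gt
  simp [Unimodal, StrictMonoOn, StrictAntiOn, Fin.exists_fin_succ' (n := N + 1),
    Fin.forall_fin_succ' (n := N + 1), -Equiv.Perm.coe_mul, fixZeroHom_mul_finRotate_castSucc,
    fixZeroHom_mul_finRotate_last, Fin.le_last, hnot]

open scoped Classical in
/-- The sign `(-1) ^ des σ` of a unimodal permutation, extended by zero to all permutations. -/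
noncomputable def unimodalSign {n : ℕ} (σ : Equiv.Perm (Fin n)) : ℤ :=
  if Unimodal σ then (-1) ^ desNum σ else 0

theorem unimodalSign_fixZeroHom : unimodalSign (fixZeroHom (N + 1) τ) = unimodalSign τ := by
  classical
  rw [unimodalSign, desNum_fixZeroHom]
  exact if_congr (unimodal_fixZeroHom τ) rfl rfl

theorem unimodalSign_fixZeroHom_mul_finRotate :
    unimodalSign (fixZeroHom (N + 1) τ * finRotate (N + 2)) = -unimodalSign τ := by
  classical
  rw [unimodalSign, desNum_fixZeroHom_mul_finRotate, pow_succ, mul_neg_one, unimodalSign,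
    neg_ite, neg_zero]
  exact if_congr (unimodal_fixZeroHom_mul_finRotate τ) rfl rfl

theorem unimodalSign_eq_zero {σ : Equiv.Perm (Fin (N + 1))} (h0 : σ 0 ≠ 0)
    (hlast : σ (Fin.last N) ≠ 0) : unimodalSign σ = 0 :=
  if_neg fun hσ => hσ.apply_zero_or_apply_last.elim h0 hlast

theorem unimodalSign_one (N : ℕ) : unimodalSign (1 : Equiv.Perm (Fin (N + 1))) = 1 := by
  have hunimodal : Unimodal (1 : Equiv.Perm (Fin (N + 1))) :=
    ⟨Fin.last N, strictMono_id.strictMonoOn _, fun i hi j _ hij =>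
      absurd hij ((Fin.le_last j).trans hi).not_gt⟩
  have hdesNum : desNum (1 : Equiv.Perm (Fin (N + 1))) = 0 := by
    simp [desNum_eq_sum, (Fin.castSucc_lt_succ).not_gt]
  rw [unimodalSign, if_pos hunimodal, hdesNum, pow_zero]

theorem coeff_nestedBracket (K : Type*) [CommRing K] (N : ℕ) (σ : Equiv.Perm (Fin (N + 1))) :
    (nestedBracket K (N + 1) 0 N 1).coeff σ = unimodalSign σ := by
  induction N with
  | zero =>
    have : Subsingleton (Equiv.Perm (Fin (0 + 1))) :=
      inferInstanceAs (Subsingleton (Equiv.Perm (Fin 1)))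
    rw [Subsingleton.elim σ 1, unimodalSign_one, Int.cast_one, nestedBracket,
      MonoidAlgebra.coeff_one_one]
  | succ N ih =>
    have hinv : (finRotate (N + 2))⁻¹ 0 = Fin.last (N + 1) :=
      Equiv.Perm.inv_eq_iff_eq.2 finRotate_last.symm
    rw [nestedBracket_zero_succ, mul_sub, mul_one, MonoidAlgebra.coeff_sub, Finsupp.sub_apply,
      MonoidAlgebra.of_apply, MonoidAlgebra.coeff_mul_single_apply, mul_one]
    by_cases h0 : σ 0 = 0
    · have hlast : (σ * (finRotate (N + 2))⁻¹) 0 ≠ 0 := by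
        rw [Equiv.Perm.mul_apply, hinv]
        exact h0 ▸ σ.injective.ne (Fin.last_pos).ne'
      obtain ⟨τ, rfl⟩ := exists_fixZeroHom_eq h0
      rw [coeff_mapDomainRingHom_fixZeroHom, ih, coeff_mapDomainRingHom_fixZeroHom_eq_zero _ hlast,
        sub_zero, unimodalSign_fixZeroHom]
    rw [coeff_mapDomainRingHom_fixZeroHom_eq_zero _ h0, zero_sub]
    by_cases hlast : (σ * (finRotate (N + 2))⁻¹) 0 = 0
    · obtain ⟨τ, hτ⟩ := exists_fixZeroHom_eq hlast
      obtain rfl : σ = fixZeroHom (N + 1) τ * finRotate (N + 2) := eq_mul_of_mul_inv_eq hτ.symm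
      rw [← hτ, coeff_mapDomainRingHom_fixZeroHom, ih, unimodalSign_fixZeroHom_mul_finRotate,
        Int.cast_neg]
    · rw [coeff_mapDomainRingHom_fixZeroHom_eq_zero _ hlast, neg_zero]
      rw [Equiv.Perm.mul_apply, hinv] at hlast
      rw [unimodalSign_eq_zero h0 hlast, Int.cast_zero]

end Unimodal

section CycleType

theorem replicate_div_eq_replicate_iff {n m d k : ℕ} (hn : n ≠ 0) (hd : m * d = n) :
    Multiset.replicate (n / k) k = Multiset.replicate m d ↔ k = d := by
  subst hd
  obtain ⟨hm, hd⟩ := mul_ne_zero_iff.1 hn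
  constructor
  · intro h
    have hcard : m * d / k = m := by simpa using congrArg Multiset.card h
    rw [hcard] at h
    exact (Multiset.replicate_right_inj hm).1 h
  · rintro rfl
    rw [Nat.mul_div_cancel _ (Nat.pos_of_ne_zero hd)]

theorem isClassFunction_fullCycleType (n : ℕ) :
    IsClassFunction (fullCycleType : Equiv.Perm (Fin n) → Multiset ℕ) := by
  intro g h
  have hparts (σ : Equiv.Perm (Fin n)) : fullCycleType σ = σ.partition.parts := by
    rw [Equiv.Perm.parts_partition, Fintype.card_fin, fullCycleType]
  have hconj : IsConj (g * h) (h * g) := isConj_iff.2 ⟨h, by group⟩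
  rw [hparts, hparts, Equiv.Perm.partition_eq_of_isConj.1 hconj]

theorem eq_orderOf_of_mem_cycleType {α : Type*} [Fintype α] [DecidableEq α] {σ : Equiv.Perm α}
    (h : ∀ j x, (σ ^ j) x = x → σ ^ j = 1) {k : ℕ} (hk : k ∈ σ.cycleType) : k = orderOf σ := by
  refine Nat.dvd_antisymm (Equiv.Perm.dvd_of_mem_cycleType hk) ?_
  obtain ⟨c, τ, rfl, hdisj, hc, rfl⟩ := Equiv.Perm.mem_cycleType_iff.1 hk
  obtain ⟨x, hx⟩ := hc.nonempty_support
  have hτ : τ x = x := (hdisj x).resolve_left (Equiv.Perm.mem_support.1 hx)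
  refine orderOf_dvd_of_pow_eq_one (h _ x ?_)
  rw [hdisj.commute.mul_pow, Equiv.Perm.mul_apply,
    Equiv.Perm.pow_apply_eq_self_of_apply_eq_self hτ, ← hc.orderOf, pow_orderOf_eq_one,
    Equiv.Perm.one_apply]

theorem fullCycleType_eq_replicate {n : ℕ} {σ : Equiv.Perm (Fin n)}
    (h : ∀ j x, (σ ^ j) x = x → σ ^ j = 1) :
    fullCycleType σ = Multiset.replicate (n / orderOf σ) (orderOf σ) := by
  obtain rfl | hσ := eq_or_ne σ 1
  · simp [fullCycleType]
  have hsupport : σ.support.card = n := by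
    have (x : Fin n) : x ∈ σ.support :=
      Equiv.Perm.mem_support.2 fun hx => hσ (by simpa using h 1 x (by rwa [pow_one]))
    rw [Finset.eq_univ_of_forall this, Finset.card_univ, Fintype.card_fin]
  have hreplicate := Multiset.eq_replicate_of_mem fun k hk => eq_orderOf_of_mem_cycleType h hk
  have hsum := σ.sum_cycleType
  rw [hreplicate, hsupport, Multiset.sum_replicate, smul_eq_mul] at hsum
  rw [fullCycleType, hsupport, Nat.sub_self, Multiset.replicate_zero, add_zero,
    Nat.div_eq_of_eq_mul_left (orderOf_pos σ) hsum.symm, ← hreplicate]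

theorem fullCycleType_finRotate_pow (N i : ℕ) :
    fullCycleType (finRotate (N + 1) ^ i) = Multiset.replicate
      ((N + 1) / orderOf (finRotate (N + 1) ^ i)) (orderOf (finRotate (N + 1) ^ i)) :=
  fullCycleType_eq_replicate fun j x => by
    rw [← pow_mul, finRotate_pow_apply_eq_self_iff, finRotate_pow_eq_one_iff]
    exact id

theorem orderOf_finRotate_pow {M : Type*} [Monoid M] {ζ : M} {N : ℕ} (hζ : orderOf ζ = N + 1)
    (i : ℕ) : orderOf (finRotate (N + 1) ^ i) = orderOf (ζ ^ i) := by
  refine orderOf_eq_orderOf_iff.2 fun j => ?_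
  rw [← pow_mul, ← pow_mul, finRotate_pow_eq_one_iff, ← orderOf_dvd_iff_pow_eq_one, hζ]

end CycleType

section SignedSums

variable {K : Type*} [Field K] [CharZero K] {N : ℕ} {ζ : K}

theorem sum_unimodalSign_mul (hζ : IsPrimitiveRoot ζ (N + 1)) {f : Equiv.Perm (Fin (N + 1)) → K}
    (hf : IsClassFunction f) :
    ∑ σ, (unimodalSign σ : K) * f σ =
      ∑ i ∈ Finset.range (N + 1), ζ ^ i * f (finRotate (N + 1) ^ i) := by
  obtain ⟨b, hb, hbC⟩ := exists_isUnit_nestedBracket_mul_cyclicSum hζ (zero_add N)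
  have hone : (nestedBracket K (N + 1) 0 N 1).coeff 1 = (cyclicSum N ζ).coeff 1 := by
    rw [coeff_nestedBracket, unimodalSign_one, Int.cast_one, coeff_one_cyclicSum]
  have := hf.linearExtension_eq_of_mul_eq_unit_mul N.succ_ne_zero
    (nestedBracket_mul_self K (by omega)) (cyclicSum_mul_self hζ.pow_eq_one) hb hbC hone
  rw [linearExtension_cyclicSum, linearExtension_eq_sum] at this
  simpa only [coeff_nestedBracket] using this

theorem sum_unimodalSign_fullCycleType (hζ : IsPrimitiveRoot ζ (N + 1)) (α : Multiset ℕ) :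
    ∑ σ : Equiv.Perm (Fin (N + 1)) with fullCycleType σ = α, (unimodalSign σ : K) =
      ∑ i ∈ Finset.range (N + 1) with
        Multiset.replicate ((N + 1) / orderOf (ζ ^ i)) (orderOf (ζ ^ i)) = α, ζ ^ i := by
  have hclass : IsClassFunction fun σ : Equiv.Perm (Fin (N + 1)) =>
      if fullCycleType σ = α then (1 : K) else 0 := fun g h => by
    simp only [isClassFunction_fullCycleType _ g h]
  simpa only [mul_ite, mul_one, mul_zero, ← Finset.sum_filter, fullCycleType_finRotate_pow,
    orderOf_finRotate_pow hζ.eq_orderOf.symm] using sum_unimodalSign_mul hζ hclass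

theorem sum_unimodalSign_fullCycleType_eq_zero {α : Multiset ℕ}
    (hα : ¬∃ d m : ℕ, α = Multiset.replicate m d) :
    ∑ σ : Equiv.Perm (Fin (N + 1)) with fullCycleType σ = α, unimodalSign σ = 0 := by
  have hsum := sum_unimodalSign_fullCycleType
    (Complex.isPrimitiveRoot_exp (N + 1) N.succ_ne_zero) α
  rw [Finset.filter_false_of_mem (s := Finset.range _) fun i _ h => hα ⟨_, _, h.symm⟩,
    Finset.sum_empty] at hsum
  exact_mod_cast hsum

theorem sum_unimodalSign_fullCycleType_replicate {d m : ℕ} (hd : m * d = N + 1) :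
    ∑ σ : Equiv.Perm (Fin (N + 1)) with fullCycleType σ = Multiset.replicate m d, unimodalSign σ =
      ArithmeticFunction.moebius d := by
  have hζ := Complex.isPrimitiveRoot_exp (N + 1) N.succ_ne_zero
  have hsum := sum_unimodalSign_fullCycleType hζ (Multiset.replicate m d)
  simp only [replicate_div_eq_replicate_iff N.succ_ne_zero hd] at hsum
  rw [sum_pow_of_orderOf_eq hζ N.succ_pos (Dvd.intro_left m hd)] at hsum
  exact_mod_cast hsum

end SignedSums

open scoped Classical in
/-- For a partition `α` of `n`, the signed sum `Σ (-1)^(des σ)` over unimodal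
permutations of cycle type `α` is `0` unless all parts of `α` are equal to some
`d`, in which case it equals `μ(d)`. -/
theorem signed_sum_unimodal (n : ℕ) (hn : 1 ≤ n) (α : Multiset ℕ)
    (hsum : α.sum = n) (hpos : ∀ a ∈ α, 1 ≤ a) :
    ((¬ ∃ d m : ℕ, α = Multiset.replicate m d) →
      (∑ σ : Equiv.Perm (Fin n),
        if Unimodal σ ∧ fullCycleType σ = α then (-1 : ℤ) ^ desNum σ else 0) = 0) ∧
    (∀ d m : ℕ, 1 ≤ m → α = Multiset.replicate m d →
      (∑ σ : Equiv.Perm (Fin n),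
        if Unimodal σ ∧ fullCycleType σ = α then (-1 : ℤ) ^ desNum σ else 0) =
        ArithmeticFunction.moebius d) := by
  obtain ⟨N, rfl⟩ := Nat.exists_eq_succ_of_ne_zero (Nat.one_le_iff_ne_zero.1 hn)
  have hsign : (∑ σ : Equiv.Perm (Fin (N + 1)),
      if Unimodal σ ∧ fullCycleType σ = α then (-1 : ℤ) ^ desNum σ else 0) =
        ∑ σ : Equiv.Perm (Fin (N + 1)) with fullCycleType σ = α, unimodalSign σ := by
    simp only [Finset.sum_filter, unimodalSign, ← ite_and, and_comm]
  rw [hsign]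
  refine ⟨sum_unimodalSign_fullCycleType_eq_zero, ?_⟩
  rintro d m - rfl
  rw [Multiset.sum_replicate, smul_eq_mul] at hsum
  exact sum_unimodalSign_fullCycleType_replicate hsum
end

section
/- For a prime p, the number of transitive unimodal permutations of {1,...,p} equals (2^(p-1) - 1)/p if p is odd, and equals 1 if p = 2. -/
open Function Finset
open scoped ArithmeticFunction.Moebius

namespace TransitiveUnimodal

section OddDivisors

lemma divisors_two_pow_mul_filter_odd (k : ℕ) {m : ℕ} (hm : Odd m) :
    {d ∈ (2 ^ k * m).divisors | Odd d} = m.divisors := by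
  ext d
  simp only [mem_filter, Nat.mem_divisors, mul_ne_zero_iff]
  constructor
  · rintro ⟨⟨hd, -, hm0⟩, hodd⟩
    exact ⟨(hodd.coprime_two_right.pow_right k).dvd_of_dvd_mul_left hd, hm0⟩
  · rintro ⟨hd, hm0⟩
    exact ⟨⟨hd.mul_left _, by positivity, hm0⟩, hm.of_dvd_nat hd⟩

lemma sum_odd_divisors_two_pow_mul {M : Type*} [AddCommMonoid M] (F : ℕ → ℕ → M) (k : ℕ) {m : ℕ}
    (hm : Odd m) : ∑ d ∈ (2 ^ k * m).divisors with Odd d, F d (2 ^ k * m / d) =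
      ∑ x ∈ m.divisorsAntidiagonal, F x.1 (2 ^ k * x.2) := by
  rw [divisors_two_pow_mul_filter_odd k hm, Nat.sum_divisorsAntidiagonal fun a b ↦ F a (2 ^ k * b)]
  refine sum_congr rfl fun d hd ↦ ?_
  rw [Nat.mul_div_assoc _ (Nat.dvd_of_mem_divisors hd)]

theorem sum_odd_divisors_moebius_mul {R : Type*} [NonAssocRing R] {f g : ℕ → R}
    (h : ∀ n ≠ 0, ∑ d ∈ n.divisors with Odd d, f (n / d) = g n) {n : ℕ} (hn : n ≠ 0) :
    ∑ d ∈ n.divisors with Odd d, (μ d : R) * g (n / d) = f n := by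
  obtain ⟨k, m, hm, rfl⟩ := Nat.exists_eq_two_pow_mul_odd hn
  rw [sum_odd_divisors_two_pow_mul (fun a b ↦ (μ a : R) * g b) k hm]
  refine (ArithmeticFunction.sum_eq_iff_sum_mul_moebius_eq_on (f := fun i ↦ f (2 ^ k * i))
    (g := fun i ↦ g (2 ^ k * i)) {i | Odd i} fun a b hab hb ↦ Odd.of_dvd_nat hb hab).1
    (fun i hi hodd ↦ ?_) m hm.pos hm
  rw [← h (2 ^ k * i) (by positivity), sum_odd_divisors_two_pow_mul (fun _ b ↦ f b) k hodd,
    Nat.sum_divisorsAntidiagonal' fun _ b ↦ f (2 ^ k * b)]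

lemma sum_odd_divisors_prime {M : Type*} [AddCommMonoid M] (F : ℕ → M) {p : ℕ} (hp : p.Prime)
    (hodd : Odd p) : ∑ d ∈ p.divisors with Odd d, F d = F 1 + F p := by
  rw [hp.divisors, filter_eq_self.2 (by simp [hodd]), sum_pair hp.one_lt.ne]

end OddDivisors

section Cycles

variable {ι α : Type*} {σ : Equiv.Perm ι} {f : α → α} {φ : ι → α}

lemma isCycleOn_univ_iff [Finite ι] :
    σ.IsCycleOn Set.univ ↔ ∀ i j, ∃ k : ℕ, (σ ^ k) i = j := by
  refine ⟨fun h i j ↦ h.exists_pow_eq' Set.finite_univ (Set.mem_univ i) (Set.mem_univ j),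
    fun h ↦ ⟨Set.bijOn_univ.2 σ.bijective, fun i _ j _ ↦ ?_⟩⟩
  obtain ⟨k, hk⟩ := h i j
  exact ⟨k, by simpa using hk⟩

lemma minimalPeriod_eq_card [Fintype ι] (hσ : σ.IsCycleOn Set.univ) (i : ι) :
    minimalPeriod σ i = Fintype.card ι := by
  rw [← coe_univ] at hσ
  refine Nat.dvd_right_iff_eq.1 fun k ↦ ?_
  rw [← isPeriodicPt_iff_minimalPeriod_dvd, IsPeriodicPt, IsFixedPt, Equiv.Perm.iterate_eq_pow,
    hσ.pow_apply_eq (mem_univ i), card_univ]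

lemma card_filter_iterate [Fintype ι] (hσ : σ.IsCycleOn Set.univ) (p : ι → Prop)
    [DecidablePred p] (i : ι) : #{k ∈ range (Fintype.card ι) | p (σ^[k] i)} = #{j | p j} := by
  classical
  have hinj : Set.InjOn (σ^[·] i) (range (Fintype.card ι)) := by
    simpa [minimalPeriod_eq_card hσ i] using iterate_injOn_Iio_minimalPeriod (f := σ) (x := i)
  have hsurj : (range (Fintype.card ι)).image (σ^[·] i) = univ := by
    rw [← card_eq_iff_eq_univ, card_image_of_injOn hinj, card_range]
  rw [← hsurj, filter_image, card_image_of_injOn (hinj.mono (filter_subset _ _))]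

lemma minimalPeriod_apply_eq_of_semiconj {g : ι → ι} (hφ : Injective φ) (h : Semiconj φ g f)
    (i : ι) : minimalPeriod f (φ i) = minimalPeriod g i := by
  refine minimalPeriod_eq_minimalPeriod_iff.2 fun k ↦ ?_
  rw [IsPeriodicPt, IsFixedPt, ← (h.iterate_right k).eq, hφ.eq_iff, IsPeriodicPt, IsFixedPt]

lemma range_eq_range_iterate [Finite ι] (hσ : σ.IsCycleOn Set.univ) (h : Semiconj φ σ f) (i : ι) :
    Set.range φ = Set.range (f^[·] (φ i)) := by
  rw [← Set.image_univ, ← hσ.range_pow Set.finite_univ (Set.mem_univ i), ← Set.range_comp]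
  refine congrArg Set.range (funext fun k ↦ ?_)
  rw [comp_apply, ← Equiv.Perm.iterate_eq_pow, (h.iterate_right k).eq]

lemma eq_of_strictMono_of_semiconj [Finite ι] [LinearOrder ι] [Preorder α] {τ : Equiv.Perm ι}
    {ψ : ι → α} (hφ : StrictMono φ) (hψ : StrictMono ψ) (hσ : σ.IsCycleOn Set.univ)
    (hτ : τ.IsCycleOn Set.univ) (hφσ : Semiconj φ σ f) (hψτ : Semiconj ψ τ f) {i j : ι}
    (hij : φ i = ψ j) : φ = ψ := by
  have := Fintype.ofFinite ι
  refine (hφ.range_inj hψ).1 ?_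
  rw [range_eq_range_iterate hσ hφσ i, range_eq_range_iterate hτ hψτ j, hij]

lemma exists_orderEmbedding_range_eq_orbit [LinearOrder α] {x : α} (hx : x ∈ periodicPts f) :
    ∃ φ : Fin (minimalPeriod f x) ↪o α, Set.range φ = Set.range (f^[·] x) := by
  have hcard : #((range (minimalPeriod f x)).image (f^[·] x)) = minimalPeriod f x := by
    rw [card_image_of_injOn (by simpa using iterate_injOn_Iio_minimalPeriod), card_range]
  refine ⟨orderEmbOfFin _ hcard, ?_⟩
  rw [range_orderEmbOfFin, coe_image]
  refine (Set.image_subset_range _ _).antisymm (Set.range_subset_iff.2 fun k ↦ ?_)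
  exact ⟨k % minimalPeriod f x,
    mem_range.2 (Nat.mod_lt k (minimalPeriod_pos_of_mem_periodicPts hx)),
    iterate_mod_minimalPeriod_eq⟩

lemma exists_orderEmbedding_semiconj [LinearOrder α] {x : α} (hx : x ∈ periodicPts f) :
    ∃ (σ : Equiv.Perm (Fin (minimalPeriod f x))) (φ : Fin (minimalPeriod f x) ↪o α),
      σ.IsCycleOn Set.univ ∧ Semiconj φ σ f ∧ x ∈ Set.range φ := by
  obtain ⟨φ, hφ⟩ := exists_orderEmbedding_range_eq_orbit hx
  have horbit (i) : ∃ a, f^[a] x = φ i := hφ.subset (Set.mem_range_self i)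
  have hlift (i) : ∃ j, φ j = f (φ i) := by
    obtain ⟨a, ha⟩ := horbit i
    exact hφ.superset ⟨a + 1, by simp only [iterate_succ_apply', ha]⟩
  choose s hs using hlift
  have hsemi : Semiconj φ s f := hs
  have hreach (i j) : ∃ k, s^[k + 1] i = j := by
    obtain ⟨a, ha⟩ := horbit i
    obtain ⟨b, hb⟩ := horbit j
    obtain ⟨n, hn⟩ :=
      Nat.exists_eq_add_one_of_ne_zero (minimalPeriod_pos_of_mem_periodicPts hx).ne'
    have hsteps : b + (a + 1) * n + 1 + a = b + (a + 1) * minimalPeriod f x := by rw [hn]; ring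
    refine ⟨b + (a + 1) * n, φ.injective ?_⟩
    rw [(hsemi.iterate_right _).eq, ← ha, ← hb, ← iterate_add_apply, hsteps,
      iterate_add_apply, ((isPeriodicPt_minimalPeriod f x).const_mul (a + 1)).eq]
  have hsurj : Surjective s := fun j ↦ by
    obtain ⟨k, hk⟩ := hreach j j
    exact ⟨s^[k] j, by rw [← iterate_succ_apply' s, hk]⟩
  refine ⟨Equiv.ofBijective s (Finite.surjective_iff_bijective.1 hsurj), φ,
    isCycleOn_univ_iff.2 fun i j ↦ ?_, hsemi, hφ.superset ⟨0, rfl⟩⟩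
  obtain ⟨k, hk⟩ := hreach i j
  exact ⟨k + 1, by rwa [← Equiv.Perm.iterate_eq_pow]⟩

end Cycles

section Laps

variable {α β : Type*} [LinearOrder α] [LinearOrder β] {f : α → α} {u v : α → Bool} {a b m : α}

lemma odd_card_le_iff_not_odd_card_lt [Fintype α] (m : α) :
    Odd #{a | m ≤ a} ↔ ¬ Odd #{a | m < a} := by
  have hle : ({a | m ≤ a} : Finset α) = insert m ({a | m < a} : Finset α) := by
    ext a
    simp [le_iff_eq_or_lt, eq_comm]
  rw [hle, card_insert_of_notMem (by simp), Nat.odd_add_one]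

/-- `f` has (at most) two laps: it strictly increases on a lower set of points, labelled `false`,
and strictly decreases on the complementary upper set, labelled `true`. At a peak of `f` either
label is possible. -/
structure IsLapLabelling (f : α → α) (u : α → Bool) : Prop where
  monotone : Monotone u
  strictMonoOn : StrictMonoOn f {a | u a = false}
  strictAntiOn : StrictAntiOn f {a | u a = true}

namespace IsLapLabelling

lemma comap {g : β → β} (hu : IsLapLabelling f u) (φ : β ↪o α) (h : Semiconj φ g f) :
    IsLapLabelling g (u ∘ φ) where
  monotone := hu.monotone.comp φ.monotone
  strictMonoOn b hb c hc hbc := by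
    simpa only [← φ.lt_iff_lt, h.eq] using hu.strictMonoOn hb hc (φ.lt_iff_lt.2 hbc)
  strictAntiOn b hb c hc hbc := by
    simpa only [← φ.lt_iff_lt, h.eq] using hu.strictAntiOn hb hc (φ.lt_iff_lt.2 hbc)

lemma eq_false_of_lt_peak (hu : IsLapLabelling f u) (hm : ∀ a, f a ≤ f m) (ha : a < m) :
    u a = false := by
  by_contra! h
  rw [Bool.ne_false_iff] at h
  have hum : u m = true := hu.monotone ha.le h
  exact (hu.strictAntiOn h hum ha).not_ge (hm a)

lemma eq_true_of_peak_lt (hu : IsLapLabelling f u) (hm : ∀ a, f a ≤ f m) (ha : m < a) :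
    u a = true := by
  by_contra h
  have hum : u m ≠ true := fun hum ↦ h (hu.monotone ha.le hum)
  simp only [ne_eq, Bool.not_eq_true] at h hum
  exact (hu.strictMonoOn hum h ha).not_ge (hm a)

lemma strictMonoOn_le_peak (hu : IsLapLabelling f u) (hf : Injective f) (hm : ∀ a, f a ≤ f m) :
    StrictMonoOn f {a | a ≤ m} := by
  intro a _ b hb hab
  obtain rfl | hb := eq_or_lt_of_le (Set.mem_ofPred.1 hb)
  · exact (hm a).lt_of_ne (hf.ne hab.ne)
  · exact hu.strictMonoOn (hu.eq_false_of_lt_peak hm (hab.trans hb))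
      (hu.eq_false_of_lt_peak hm hb) hab

lemma strictAntiOn_peak_le (hu : IsLapLabelling f u) (hf : Injective f) (hm : ∀ a, f a ≤ f m) :
    StrictAntiOn f {a | m ≤ a} := by
  intro a ha b _ hab
  obtain rfl | ha := eq_or_lt_of_le (Set.mem_ofPred.1 ha)
  · exact (hm b).lt_of_ne (hf.ne hab.ne')
  · exact hu.strictAntiOn (hu.eq_true_of_peak_lt hm ha)
      (hu.eq_true_of_peak_lt hm (ha.trans hab)) hab

lemma eq_decide_le_or_eq_decide_lt (hu : IsLapLabelling f u) (hm : ∀ a, f a ≤ f m) :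
    (u = fun a ↦ decide (m ≤ a)) ∨ u = fun a ↦ decide (m < a) := by
  have aux (a : α) (ha : a ≠ m) : u a = decide (m < a) := by
    obtain ha | ha := ha.lt_or_gt
    · simp [hu.eq_false_of_lt_peak hm ha, ha.le]
    · simp [hu.eq_true_of_peak_lt hm ha, ha]
  cases hum : u m
  · right
    ext a
    obtain rfl | ha := eq_or_ne a m
    · simp [hum]
    · simp [aux a ha]
  · left
    ext a
    obtain rfl | ha := eq_or_ne a m
    · simp [hum]
    · simp [aux a ha, ha.symm.le_iff_lt]

lemma eq_of_odd [Fintype α] (hu : IsLapLabelling f u) (hv : IsLapLabelling f v)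
    (hu' : Odd #{a | u a}) (hv' : Odd #{a | v a}) : u = v := by
  obtain ⟨a, -⟩ := card_pos.1 hu'.pos
  have : Nonempty α := ⟨a⟩
  obtain ⟨m, hm⟩ := Finite.exists_max f
  have hcard := odd_card_le_iff_not_odd_card_lt m
  obtain rfl | rfl := hu.eq_decide_le_or_eq_decide_lt hm <;>
    obtain rfl | rfl := hv.eq_decide_le_or_eq_decide_lt hm
  · rfl
  · exact absurd (by simpa using hv') (hcard.1 (by simpa using hu'))
  · exact absurd (by simpa using hu') (hcard.1 (by simpa using hv'))
  · rfl

end IsLapLabelling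

lemma isLapLabelling_decide_le (h₁ : StrictMonoOn f {a | a ≤ m}) (h₂ : StrictAntiOn f {a | m ≤ a}) :
    IsLapLabelling f (fun a ↦ decide (m ≤ a)) where
  monotone a b hab := by simpa [Bool.le_iff_imp] using hab.trans'
  strictMonoOn := h₁.mono fun a ha ↦ by simpa using le_of_lt (by simpa using ha)
  strictAntiOn := h₂.mono fun a ha ↦ by simpa using ha

lemma isLapLabelling_decide_lt (h₁ : StrictMonoOn f {a | a ≤ m}) (h₂ : StrictAntiOn f {a | m ≤ a}) :
    IsLapLabelling f (fun a ↦ decide (m < a)) where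
  monotone a b hab := by simpa [Bool.le_iff_imp] using hab.trans_lt'
  strictMonoOn := h₁.mono fun a ha ↦ by simpa using ha
  strictAntiOn := h₂.mono fun a ha ↦ le_of_lt (by simpa using ha)

end Laps

section UnimodalPerm

variable {n : ℕ} {σ : Equiv.Perm (Fin n)} {u : Fin n → Bool}

lemma unimodal_of_isLapLabelling [NeZero n] (hu : IsLapLabelling σ u) : Unimodal σ := by
  obtain ⟨m, hm⟩ := Finite.exists_max σ
  exact ⟨m, hu.strictMonoOn_le_peak σ.injective hm, hu.strictAntiOn_peak_le σ.injective hm⟩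

lemma exists_isLapLabelling_odd (hσ : Unimodal σ) :
    ∃ u, IsLapLabelling σ u ∧ Odd #{i | u i} := by
  obtain ⟨m, h₁, h₂⟩ := hσ
  by_cases h : Odd #{i | m < i}
  · exact ⟨_, isLapLabelling_decide_lt h₁ h₂, by simpa using h⟩
  · exact ⟨_, isLapLabelling_decide_le h₁ h₂, by
      simpa using (odd_card_le_iff_not_odd_card_lt m).2 h⟩

end UnimodalPerm

section Tent

variable {x : Lex (ℕ → Bool)}

/-- The tent map. When `x` is the binary expansion `0.x₀x₁x₂…` of a real `t`, this is the map
`t ↦ min (2 * t) (2 - 2 * t)`, and the lexicographic order is the order of the expansions. -/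
def tent (x : Lex (ℕ → Bool)) : Lex (ℕ → Bool) :=
  toLex fun i ↦ xor (x 0) (x (i + 1))

@[simp]
lemma tent_apply (x : Lex (ℕ → Bool)) (i : ℕ) : tent x i = xor (x 0) (x (i + 1)) := rfl

lemma isLapLabelling_tent : IsLapLabelling tent (fun x ↦ x 0) where
  monotone x y hxy := by
    obtain rfl | ⟨k, hk, hlt⟩ := hxy.eq_or_lt
    · rfl
    · cases k with
      | zero => exact hlt.le
      | succ k => exact (hk 0 k.succ_pos).le
  strictMonoOn := by
    rintro x (hx : x 0 = false) y (hy : y 0 = false) ⟨k, hk, hlt⟩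
    cases k with
    | zero => simp [hx, hy] at hlt
    | succ k => exact ⟨k, fun j hj ↦ by simp [hx, hy, hk (j + 1) (by lia)], by simpa [hx, hy]⟩
  strictAntiOn := by
    rintro x (hx : x 0 = true) y (hy : y 0 = true) ⟨k, hk, hlt⟩
    cases k with
    | zero => simp [hx, hy] at hlt
    | succ k =>
      refine ⟨k, fun j hj ↦ by simp [hx, hy, hk (j + 1) (by lia)], ?_⟩
      simpa [hx, hy, Bool.lt_iff, and_comm] using hlt

lemma iterate_tent_succ_apply (k i : ℕ) : tent^[k + 1] x i = xor (x k) (x (i + k + 1)) := by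
  induction k generalizing i with
  | zero => simp
  | succ k ih =>
    rw [iterate_succ_apply', tent_apply, ih, ih, zero_add, add_right_comm i 1 k]
    cases x k <;> simp [add_assoc]

end Tent

section ReversingPts

variable {n d k : ℕ} {x y : Lex (ℕ → Bool)}

/-- The periodic points `x` of period `n` of the tent map near which `tent^[n]` reverses the order,
which is what the digit `x (n - 1)` records. -/
def reversingPts (n : ℕ) : Set (Lex (ℕ → Bool)) :=
  {x | IsPeriodicPt tent n x ∧ x (n - 1) = true}

/-- For `n ≠ 0`, the points of `reversingPts n` whose least period is `n`. -/
def primitiveReversingPts (n : ℕ) : Set (Lex (ℕ → Bool)) :=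
  {x | minimalPeriod tent x = n ∧ x (n - 1) = true}

lemma isPeriodicPt_tent_succ_iff :
    IsPeriodicPt tent (n + 1) x ↔ ∀ i, x (i + n + 1) = xor (x i) (x n) := by
  refine funext_iff.trans (forall_congr' fun i ↦ ?_)
  rw [iterate_tent_succ_apply]
  cases x n <;> cases x i <;> simp

lemma mem_reversingPts_succ_iff : x ∈ reversingPts (n + 1) ↔
    x n = true ∧ ∀ i, x (i + n + 1) = !x i := by
  rw [reversingPts, Set.mem_ofPred_eq, isPeriodicPt_tent_succ_iff, Nat.add_sub_cancel, and_comm]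
  refine and_congr_right fun hx ↦ ?_
  simp only [hx, Bool.xor_true]

lemma eq_of_mem_reversingPts (hx : x ∈ reversingPts (n + 1)) (hy : y ∈ reversingPts (n + 1))
    (h : ∀ i < n, x i = y i) : x = y := by
  rw [mem_reversingPts_succ_iff] at hx hy
  refine funext fun i ↦ ?_
  induction i using Nat.strong_induction_on with
  | h i ih =>
    obtain hi | rfl | hi := lt_trichotomy i n
    · exact h i hi
    · rw [hx.1, hy.1]
    · obtain ⟨j, rfl⟩ := Nat.exists_eq_add_of_le' (Nat.succ_le_of_lt hi)
      rw [Nat.succ_eq_add_one, ← add_assoc, hx.2, hy.2, ih j (by lia)]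

lemma exists_mem_reversingPts (v : ℕ → Bool) : ∃ x ∈ reversingPts (n + 1), ∀ i < n, x i = v i := by
  let w (i : ℕ) : Bool := if i < n then v i else true
  refine ⟨toLex fun i ↦ xor (w (i % (n + 1))) (decide (Odd (i / (n + 1)))),
    mem_reversingPts_succ_iff.2 ⟨?_, fun i ↦ ?_⟩, fun i hi ↦ ?_⟩
  · simp [w, Nat.div_eq_of_lt]
  · simp [add_assoc, -Nat.not_odd_iff_even, Nat.odd_add_one]
  · simp [w, Nat.mod_eq_of_lt (hi.trans n.lt_add_one), Nat.div_eq_of_lt (hi.trans n.lt_add_one), hi]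

lemma ncard_reversingPts_succ (n : ℕ) : (reversingPts (n + 1)).ncard = 2 ^ n := by
  let restrict (x : reversingPts (n + 1)) (i : Fin n) : Bool := x.1 i
  have hrestrict : Bijective restrict := by
    refine ⟨fun x y hxy ↦ Subtype.ext <| eq_of_mem_reversingPts x.2 y.2 fun i hi ↦
      congrFun hxy ⟨i, hi⟩, fun v ↦ ?_⟩
    obtain ⟨x, hx, hxv⟩ := exists_mem_reversingPts (n := n) fun i ↦
      if hi : i < n then v ⟨i, hi⟩ else true
    exact ⟨⟨x, hx⟩, funext fun i ↦ by simp [restrict, hxv]⟩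
  rw [← Nat.card_coe_set_eq, Nat.card_eq_of_bijective restrict hrestrict]
  simp

lemma apply_add_mul_of_isPeriodicPt (hx : IsPeriodicPt tent (n + 1) x) (i k : ℕ) :
    x (i + k * (n + 1)) = xor (x i) (x n && decide (Odd k)) := by
  rw [isPeriodicPt_tent_succ_iff] at hx
  induction k with
  | zero => simp
  | succ k ih =>
    rw [add_one_mul, ← add_assoc, ← add_assoc, hx, ih]
    cases x n <;> by_cases hk : Odd k <;> simp [hk, Nat.odd_add_one]

lemma apply_mul_sub_one_of_isPeriodicPt (hx : IsPeriodicPt tent d x) (hd : d ≠ 0) (hk : k ≠ 0) :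
    x (d * k - 1) = (x (d - 1) && decide (Odd k)) := by
  obtain ⟨d, rfl⟩ := Nat.exists_eq_add_one_of_ne_zero hd
  obtain ⟨k, rfl⟩ := Nat.exists_eq_add_one_of_ne_zero hk
  rw [show (d + 1) * (k + 1) - 1 = d + k * (d + 1) from Nat.sub_eq_of_eq_add (by ring),
    apply_add_mul_of_isPeriodicPt hx, Nat.add_sub_cancel]
  cases x d <;> by_cases hk : Odd k <;> simp [hk, Nat.odd_add_one]

lemma mem_reversingPts_iff (hn : n ≠ 0) : x ∈ reversingPts n ↔
    minimalPeriod tent x ∣ n ∧ Odd (n / minimalPeriod tent x) ∧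
      x (minimalPeriod tent x - 1) = true := by
  rw [reversingPts, Set.mem_ofPred_eq, isPeriodicPt_iff_minimalPeriod_dvd]
  refine and_congr_right fun hdvd ↦ ?_
  obtain ⟨k, hk⟩ := hdvd
  obtain ⟨hd, hk0⟩ := mul_ne_zero_iff.1 (hk ▸ hn)
  have hlast : x (n - 1) = (x (minimalPeriod tent x - 1) && decide (Odd k)) :=
    hk ▸ apply_mul_sub_one_of_isPeriodicPt (isPeriodicPt_minimalPeriod tent x) hd hk0
  rw [hlast, Nat.div_eq_of_eq_mul_right (Nat.pos_of_ne_zero hd) hk, Bool.and_eq_true, and_comm,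
    decide_eq_true_iff]

lemma mem_primitiveReversingPts_div_iff (hn : n ≠ 0) (hd : d ∣ n) (hodd : Odd d) :
    x ∈ primitiveReversingPts (n / d) ↔ x ∈ reversingPts n ∧ n / minimalPeriod tent x = d := by
  rw [mem_reversingPts_iff hn]
  constructor
  · rintro ⟨hmin, hx⟩
    rw [hmin, Nat.div_div_self hd hn]
    exact ⟨⟨Nat.div_dvd_of_dvd hd, hodd, hx⟩, rfl⟩
  · rintro ⟨⟨hdvd, -, hx⟩, rfl⟩
    have hmin := Nat.div_div_self hdvd hn
    exact ⟨hmin.symm, hmin.symm ▸ hx⟩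

lemma sum_ncard_primitiveReversingPts (hn : n ≠ 0) :
    ∑ d ∈ n.divisors with Odd d, (primitiveReversingPts (n / d)).ncard = 2 ^ (n - 1) := by
  obtain ⟨m, rfl⟩ := Nat.exists_eq_succ_of_ne_zero hn
  rw [Nat.succ_sub_one, ← ncard_reversingPts_succ]
  have hfin : (reversingPts (m + 1)).Finite :=
    Set.finite_of_ncard_ne_zero (by simp [ncard_reversingPts_succ])
  have hmaps : ∀ x ∈ hfin.toFinset, (m + 1) / minimalPeriod tent x ∈
      {d ∈ (m + 1).divisors | Odd d} := by
    intro x hx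
    obtain ⟨hdvd, hodd, -⟩ := (mem_reversingPts_iff hn).1 (hfin.mem_toFinset.1 hx)
    exact mem_filter.2 ⟨Nat.mem_divisors.2 ⟨Nat.div_dvd_of_dvd hdvd, hn⟩, hodd⟩
  rw [Set.ncard_eq_toFinset_card _ hfin, card_eq_sum_card_fiberwise hmaps]
  refine sum_congr rfl fun d hd ↦ ?_
  simp only [mem_filter, Nat.mem_divisors] at hd
  rw [← Set.ncard_coe_finset]
  congr 1
  ext x
  simp [mem_primitiveReversingPts_div_iff hn hd.1.1 hd.2]

end ReversingPts

section InvariantCoordinate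

variable {α β : Type*} {f : α → α} {u : α → Bool} {a b : α}

/-- The Milnor–Thurston invariant coordinate of `a`: its `k`-th digit is the parity of the number
of `l ≤ k` such that `f^[l] a` lies on the decreasing lap, that is, it tells whether `f^[k + 1]`
reverses the order near `a`. -/
def invariantCoordinate (f : α → α) (u : α → Bool) (a : α) : Lex (ℕ → Bool) :=
  toLex fun k ↦ decide (Odd #{l ∈ range (k + 1) | u (f^[l] a)})

lemma invariantCoordinate_apply (k : ℕ) :
    invariantCoordinate f u a k = decide (Odd #{l ∈ range (k + 1) | u (f^[l] a)}) := rfl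

@[simp]
lemma invariantCoordinate_zero : invariantCoordinate f u a 0 = u a := by
  cases h : u a <;> simp [invariantCoordinate_apply, filter_singleton, h]

lemma invariantCoordinate_succ (k : ℕ) :
    invariantCoordinate f u a (k + 1) =
      xor (invariantCoordinate f u a k) (u (f^[k + 1] a)) := by
  rw [invariantCoordinate_apply, range_add_one, filter_insert]
  cases h : u (f^[k + 1] a) <;>
    simp [invariantCoordinate_apply, -Nat.not_odd_iff_even, Nat.odd_add_one]

lemma semiconj_invariantCoordinate : Semiconj (invariantCoordinate f u) f tent := by
  intro a
  refine funext fun k ↦ ?_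
  induction k with
  | zero => simp [invariantCoordinate_succ]
  | succ k ih =>
    rw [invariantCoordinate_succ, ih, tent_apply, tent_apply, invariantCoordinate_succ (k + 1),
      ← iterate_succ_apply, Bool.xor_assoc]

lemma invariantCoordinate_tent (x : Lex (ℕ → Bool)) :
    invariantCoordinate tent (fun y ↦ y 0) x = x := by
  refine funext fun k ↦ ?_
  induction k with
  | zero => simp
  | succ k ih => simp [invariantCoordinate_succ, ih, iterate_tent_succ_apply, -iterate_succ]

lemma invariantCoordinate_comp {g : β → β} {φ : β → α} (h : Semiconj φ g f) (b : β) :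
    invariantCoordinate g (u ∘ φ) b = invariantCoordinate f u (φ b) := by
  have hiter (l : ℕ) : φ (g^[l] b) = f^[l] (φ b) := (h.iterate_right l).eq b
  simp only [invariantCoordinate, comp_apply, hiter]

lemma eq_invariantCoordinate {φ : α → Lex (ℕ → Bool)} (h : Semiconj φ f tent) :
    φ = invariantCoordinate f (fun a ↦ φ a 0) := by
  funext a
  rw [← invariantCoordinate_tent (φ a), ← invariantCoordinate_comp h]
  rfl

section Order

variable [LinearOrder α]

lemma invariantCoordinate_lt_of_label_ne (hu : Monotone u) (hab : a < b) (h : u a ≠ u b) :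
    invariantCoordinate f u a < invariantCoordinate f u b :=
  isLapLabelling_tent.monotone.reflect_lt (by simpa using (hu hab.le).lt_of_ne h)

lemma invariantCoordinate_lt_of_ne (hu : IsLapLabelling f u) (hab : a < b) {k : ℕ}
    (hk : invariantCoordinate f u a k ≠ invariantCoordinate f u b k) :
    invariantCoordinate f u a < invariantCoordinate f u b := by
  induction k generalizing a b with
  | zero => exact invariantCoordinate_lt_of_label_ne hu.monotone hab (by simpa using hk)
  | succ k ih =>
    obtain hne | heq := ne_or_eq (u a) (u b)
    · exact invariantCoordinate_lt_of_label_ne hu.monotone hab hne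
    have hsemi := (semiconj_invariantCoordinate (f := f) (u := u)).eq
    have hk' : invariantCoordinate f u (f a) k ≠ invariantCoordinate f u (f b) k := by
      simpa [hsemi, heq] using hk
    cases hb : u b with
    | false =>
      have ha : u a = false := heq.trans hb
      have hlt := ih (hu.strictMonoOn ha hb hab) hk'
      rw [hsemi, hsemi] at hlt
      exact (isLapLabelling_tent.strictMonoOn.lt_iff_lt (by simpa) (by simpa)).1 hlt
    | true =>
      have ha : u a = true := heq.trans hb
      have hlt := ih (hu.strictAntiOn ha hb hab) hk'.symm
      rw [hsemi, hsemi] at hlt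
      exact (isLapLabelling_tent.strictAntiOn.lt_iff_gt (by simpa) (by simpa)).1 hlt

lemma iterate_lt_iterate_of_invariantCoordinate_eq (hu : IsLapLabelling f u) (hab : a < b)
    (h : invariantCoordinate f u a = invariantCoordinate f u b) (k : ℕ) :
    if invariantCoordinate f u a k then f^[k + 1] b < f^[k + 1] a
    else f^[k + 1] a < f^[k + 1] b := by
  have hlabel (k : ℕ) : u (f^[k] a) = u (f^[k] b) := by
    simp only [← invariantCoordinate_zero (f := f),
      (semiconj_invariantCoordinate.iterate_right k).eq, h]
  have hstep {b c : α} (hbc : b < c) (hb : u b = u c) :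
      if u b then f c < f b else f b < f c := by
    split_ifs with h
    · exact hu.strictAntiOn h (hb.symm.trans h) hbc
    · rw [Bool.not_eq_true] at h
      exact hu.strictMonoOn h (hb.symm.trans h) hbc
  induction k with
  | zero => simpa using hstep hab (hlabel 0)
  | succ k ih =>
    rw [invariantCoordinate_succ, iterate_succ_apply' f (k + 1), iterate_succ_apply' f (k + 1)]
    have hk := hlabel (k + 1)
    cases ha : invariantCoordinate f u a k <;> rw [ha] at ih
    · simpa [-iterate_succ] using hstep ih hk
    · rw [Bool.true_xor, hk]
      simpa [-iterate_succ, ite_not] using hstep ih hk.symm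

/-- If `a < b` had the same coordinate, `f^[n]` would fix both points and exchange their order. -/
lemma strictMono_invariantCoordinate (hu : IsLapLabelling f u) {n : ℕ} (hn : n ≠ 0)
    (hper : ∀ a, IsPeriodicPt f n a) (hodd : ∀ a, invariantCoordinate f u a (n - 1) = true) :
    StrictMono (invariantCoordinate f u) := by
  intro a b hab
  suffices h : invariantCoordinate f u a ≠ invariantCoordinate f u b by
    obtain ⟨k, hk⟩ := ne_iff.1 h
    exact invariantCoordinate_lt_of_ne hu hab hk
  intro h
  have hlt := iterate_lt_iterate_of_invariantCoordinate_eq hu hab h (n - 1)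
  rw [hodd, if_pos rfl, Nat.sub_one_add_one hn, hper a, hper b] at hlt
  exact hlt.not_gt hab

end Order

end InvariantCoordinate

section Coding

section Fintype

variable {ι : Type*} [Fintype ι] {σ τ : Equiv.Perm ι} {u v : ι → Bool}

lemma invariantCoordinate_card_sub_one (hσ : σ.IsCycleOn Set.univ) (i : ι) :
    invariantCoordinate σ u i (Fintype.card ι - 1) = decide (Odd #{j | u j}) := by
  have : Nonempty ι := ⟨i⟩
  rw [invariantCoordinate_apply, Nat.sub_add_cancel Fintype.card_pos,
    card_filter_iterate hσ (fun j ↦ u j = true)]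

variable [LinearOrder ι]

lemma strictMono_invariantCoordinate_of_isCycleOn (hσ : σ.IsCycleOn Set.univ)
    (hu : IsLapLabelling σ u) (hodd : Odd #{i | u i}) : StrictMono (invariantCoordinate σ u) := by
  obtain ⟨i, -⟩ := card_pos.1 hodd.pos
  have : Nonempty ι := ⟨i⟩
  refine strictMono_invariantCoordinate hu (Fintype.card_ne_zero (α := ι)) (fun i ↦ ?_) fun i ↦ ?_
  · exact minimalPeriod_eq_card hσ i ▸ isPeriodicPt_minimalPeriod σ i
  · rw [invariantCoordinate_card_sub_one hσ, decide_eq_true hodd]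

lemma invariantCoordinate_mem_primitiveReversingPts (hσ : σ.IsCycleOn Set.univ)
    (hu : IsLapLabelling σ u) (hodd : Odd #{i | u i}) (i : ι) :
    invariantCoordinate σ u i ∈ primitiveReversingPts (Fintype.card ι) := by
  refine ⟨?_, by rw [invariantCoordinate_card_sub_one hσ, decide_eq_true hodd]⟩
  rw [minimalPeriod_apply_eq_of_semiconj
    (strictMono_invariantCoordinate_of_isCycleOn hσ hu hodd).injective
    semiconj_invariantCoordinate, minimalPeriod_eq_card hσ]

lemma eq_of_invariantCoordinate_eq (hσ : σ.IsCycleOn Set.univ) (hu : IsLapLabelling σ u)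
    (hu' : Odd #{i | u i}) (hτ : τ.IsCycleOn Set.univ) (hv : IsLapLabelling τ v)
    (hv' : Odd #{i | v i}) {i j : ι}
    (hij : invariantCoordinate σ u i = invariantCoordinate τ v j) : σ = τ ∧ i = j := by
  have hσ' := strictMono_invariantCoordinate_of_isCycleOn hσ hu hu'
  have hτ' := strictMono_invariantCoordinate_of_isCycleOn hτ hv hv'
  have heq := eq_of_strictMono_of_semiconj hσ' hτ' hσ hτ semiconj_invariantCoordinate
    semiconj_invariantCoordinate hij
  refine ⟨Equiv.ext fun k ↦ hσ'.injective ?_, hσ'.injective (by rw [hij, heq])⟩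
  rw [semiconj_invariantCoordinate.eq, heq, semiconj_invariantCoordinate.eq]

end Fintype

variable {n : ℕ} [NeZero n]

lemma exists_invariantCoordinate_eq {x : Lex (ℕ → Bool)} (hx : x ∈ primitiveReversingPts n) :
    ∃ (σ : Equiv.Perm (Fin n)) (u : Fin n → Bool) (i : Fin n), σ.IsCycleOn Set.univ ∧
      IsLapLabelling σ u ∧ Odd #{i | u i} ∧ invariantCoordinate σ u i = x := by
  obtain ⟨rfl, hxn⟩ := hx
  have hper : x ∈ periodicPts tent := minimalPeriod_pos_iff_mem_periodicPts.1 (NeZero.pos _)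
  obtain ⟨σ, φ, hσ, hφ, i, hi⟩ := exists_orderEmbedding_semiconj hper
  have heq := congrFun (eq_invariantCoordinate hφ) i
  refine ⟨σ, fun j ↦ φ j 0, i, hσ, isLapLabelling_tent.comap φ hφ, ?_, heq.symm.trans hi⟩
  have hcard := invariantCoordinate_card_sub_one (u := fun j ↦ φ j 0) hσ i
  rw [Fintype.card_fin, ← heq, hi, hxn] at hcard
  simpa using hcard

/-- The unimodal permutations that are a single cycle on all points. -/
def transitiveUnimodals (n : ℕ) : Set (Equiv.Perm (Fin n)) :=
  {σ | Unimodal σ ∧ σ.IsCycleOn Set.univ}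

theorem ncard_transitiveUnimodals_mul :
    (transitiveUnimodals n).ncard * n = (primitiveReversingPts n).ncard := by
  choose u hu hodd using fun σ : transitiveUnimodals n ↦ exists_isLapLabelling_odd σ.2.1
  let code (p : transitiveUnimodals n × Fin n) : primitiveReversingPts n :=
    ⟨invariantCoordinate p.1 (u p.1) p.2, by
      simpa using invariantCoordinate_mem_primitiveReversingPts p.1.2.2 (hu p.1) (hodd p.1) p.2⟩
  have hcode : Bijective code := by
    refine ⟨fun p q hpq ↦ ?_, fun ⟨x, hx⟩ ↦ ?_⟩
    · obtain ⟨hσ, hi⟩ := eq_of_invariantCoordinate_eq p.1.2.2 (hu p.1) (hodd p.1) q.1.2.2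
        (hu q.1) (hodd q.1) (Subtype.ext_iff.1 hpq)
      exact Prod.ext (Subtype.ext hσ) hi
    · obtain ⟨σ, v, i, hσ, hv, hv', rfl⟩ := exists_invariantCoordinate_eq hx
      let σ' : transitiveUnimodals n := ⟨σ, unimodal_of_isLapLabelling hv, hσ⟩
      have huv : u σ' = v := (hu σ').eq_of_odd hv (hodd σ') hv'
      exact ⟨(σ', i), Subtype.ext (by simp only [code, huv, σ'])⟩
  rw [← Nat.card_coe_set_eq, ← Nat.card_coe_set_eq, ← Nat.card_eq_of_bijective code hcode,
    Nat.card_prod, Nat.card_fin]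

end Coding

end TransitiveUnimodal

open TransitiveUnimodal

theorem card_transitive_unimodal_prime_general (n : ℕ) (hn : n ≠ 0) :
    (Nat.card {σ : Equiv.Perm (Fin n) //
        Unimodal σ ∧ ∀ i j : Fin n, ∃ k : ℕ, (σ ^ k) i = j} : ℤ) * n =
      ∑ d ∈ n.divisors with Odd d, μ d * 2 ^ (n / d - 1) := by
  have : NeZero n := ⟨hn⟩
  have hinv := sum_odd_divisors_moebius_mul (f := fun m ↦ ((primitiveReversingPts m).ncard : ℤ))
    (g := fun m ↦ 2 ^ (m - 1)) (fun m hm ↦ mod_cast sum_ncard_primitiveReversingPts hm) hn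
  simp_rw [← isCycleOn_univ_iff]
  exact_mod_cast (congrArg Nat.cast ncard_transitiveUnimodals_mul).trans hinv.symm

/-- For a prime `p`, the number of transitive unimodal permutations of
`{1,…,p}` is `1` if `p = 2` and `(2^(p-1) - 1)/p` if `p` is odd. -/
theorem card_transitive_unimodal_prime (p : ℕ) (hp : p.Prime) :
    (p = 2 → Nat.card {σ : Equiv.Perm (Fin p) //
        Unimodal σ ∧ ∀ i j : Fin p, ∃ k : ℕ, (σ ^ k) i = j} = 1) ∧
    (Odd p → (Nat.card {σ : Equiv.Perm (Fin p) //
        Unimodal σ ∧ ∀ i j : Fin p, ∃ k : ℕ, (σ ^ k) i = j} : ℤ) * p =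
        2 ^ (p - 1) - 1) := by
  have hcard := card_transitive_unimodal_prime_general p hp.ne_zero
  refine ⟨?_, fun hodd ↦ ?_⟩
  · rintro rfl
    have hodd : {d ∈ Nat.divisors 2 | Odd d} = {1} := by decide
    rw [hodd, sum_singleton] at hcard
    have hmul : (_ : ℤ) * 2 = 1 * 2 := hcard.trans (by simp)
    exact_mod_cast mul_right_cancel₀ two_ne_zero hmul
  · rw [hcard, sum_odd_divisors_prime _ hp hodd, Nat.div_self hp.pos,
      ArithmeticFunction.moebius_apply_prime hp]
    simp [sub_eq_add_neg]
end
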